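/- arXiv:math/9807077 — 4 statements merged into one kernel-verified Lean document; each statement's English description precedes it below -/
import Mathlib

section
/- Let V be a regular vertex operator algebra and W an ordinary V-module. Then D(W) = W′. -/
noncomputable section

/-- The generalized binomial coefficient `C(m, i)` for `m ∈ ℤ`, `i ∈ ℕ`,
as a complex number: `m(m-1)⋯(m-i+1)/i!`. -/
def cchoose (m : ℤ) (i : ℕ) : ℂ :=
  (∏ j ∈ Finset.range i, ((m : ℂ) - (j : ℂ))) / (Nat.factorial i : ℂ)

/-- A vertex operator algebra `V = ⊕ₙ V₍ₙ₎` over `ℂ`.  The vertex operator map is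
recorded through its modes `op u n v = uₙ v` (so `Y(u,x)v = Σₙ uₙv x^{-n-1}`), with
vacuum `one`, conformal vector `omega` (with `L(k) = ω_{k+1}`), central charge `cc`,
weight grading `wtSpace` with projections `proj`.  The Jacobi identity is recorded in
the equivalent form of the Borcherds identity on modes. -/
structure VOA where
  carrier : Type
  [grp : AddCommGroup carrier]
  [mdl : Module ℂ carrier]
  op : carrier → ℤ → carrier → carrier
  one : carrier
  omega : carrier
  wtSpace : ℤ → Submodule ℂ carrier
  proj : ℤ → carrier → carrier
  cc : ℂ
  op_linear_left : ∀ (n : ℤ) (w : carrier), IsLinearMap ℂ fun u => op u n w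
  op_linear_right : ∀ (u : carrier) (n : ℤ), IsLinearMap ℂ (op u n)
  trunc : ∀ u v : carrier, ∃ N : ℤ, ∀ n : ℤ, N ≤ n → op u n v = 0
  one_op : ∀ (n : ℤ) (v : carrier), op one n v = if n = -1 then v else 0
  create_nonneg : ∀ (v : carrier) (n : ℤ), 0 ≤ n → op v n one = 0
  create : ∀ v : carrier, op v (-1) one = v
  borcherds : ∀ (u v w : carrier) (l m n : ℤ),
    (∑ᶠ i : ℕ, cchoose m i • op (op u (l + (i : ℤ)) v) (m + n - (i : ℤ)) w)
      = ∑ᶠ i : ℕ, ((-1 : ℂ) ^ i * cchoose l i) •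
          (op u (l + m - (i : ℤ)) (op v (n + (i : ℤ)) w)
            - ((-1 : ℂ) ^ l) • op v (l + n - (i : ℤ)) (op u (m + (i : ℤ)) w))
  proj_linear : ∀ n : ℤ, IsLinearMap ℂ (proj n)
  proj_mem : ∀ (n : ℤ) (v : carrier), proj n v ∈ wtSpace n
  proj_eq : ∀ n : ℤ, ∀ v ∈ wtSpace n, proj n v = v
  proj_ne : ∀ m n : ℤ, m ≠ n → ∀ v ∈ wtSpace m, proj n v = 0
  proj_finite : ∀ v : carrier, (Function.support fun n => proj n v).Finite
  proj_sum : ∀ v : carrier, (∑ᶠ n : ℤ, proj n v) = v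
  fd : ∀ n : ℤ, FiniteDimensional ℂ (wtSpace n)
  lower_trunc : ∃ N : ℤ, ∀ n : ℤ, n < N → wtSpace n = ⊥
  one_wt : one ∈ wtSpace 0
  omega_wt : omega ∈ wtSpace 2
  op_wt : ∀ k m n : ℤ, ∀ u ∈ wtSpace k, ∀ v ∈ wtSpace m, op u n v ∈ wtSpace (k + m - n - 1)
  L_zero : ∀ n : ℤ, ∀ v ∈ wtSpace n, op omega 1 v = (n : ℂ) • v
  L_neg_one : ∀ (u : carrier) (n : ℤ) (w : carrier),
    op (op omega 0 u) n w = (-(n : ℂ)) • op u (n - 1) w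
  virasoro : ∀ (m n : ℤ) (v : carrier),
    op omega (m + 1) (op omega (n + 1) v) - op omega (n + 1) (op omega (m + 1) v)
      = ((m : ℂ) - (n : ℂ)) • op omega (m + n + 1) v
        + (if m + n = 0 then (((m : ℂ) ^ 3 - (m : ℂ)) / 12) * cc else 0) • v

attribute [instance] VOA.grp VOA.mdl

namespace VOA

variable (V : VOA)

/-- The Virasoro operator `L(k) = ω_{k+1}`. -/
def L (k : ℤ) (v : V.carrier) : V.carrier := V.op V.omega (k + 1) v

/-- The positive-weight part `V₊ = ⊕_{n ≥ 1} V₍ₙ₎`. -/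
def pos : Submodule ℂ V.carrier := ⨆ (n : ℤ) (_ : 1 ≤ n), V.wtSpace n

/-- Zhu's subspace `C₂(V) = span{u₋₂v : u, v ∈ V}`. -/
def C2 : Submodule ℂ V.carrier :=
  Submodule.span ℂ {x : V.carrier | ∃ u v : V.carrier, x = V.op u (-2) v}

/-- The subspace `C₁(V) = span(v₋₁V₊ (v ∈ V₊) together with L(-1)V)`. -/
def C1 : Submodule ℂ V.carrier :=
  Submodule.span ℂ
    ({x : V.carrier | ∃ u ∈ V.pos, ∃ v ∈ V.pos, x = V.op u (-1) v}
      ∪ {x : V.carrier | ∃ v : V.carrier, x = V.op V.omega 0 v})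

/-- Iterated application of modes: `iterApply [(u¹,n₁),…,(uʳ,n_r)] w = u¹_{n₁} ⋯ uʳ_{n_r} w`. -/
def iterApply : List (V.carrier × ℤ) → V.carrier → V.carrier
  | [], w => w
  | p :: l, w => V.op p.1 p.2 (iterApply l w)

/-- `U ⊆ V` generates `V` as a vertex operator algebra:  `V` is linearly spanned by
the elements `u¹_{n₁} ⋯ uʳ_{n_r} 1` with `uⁱ ∈ U`, `n_i ∈ ℤ`. -/
def generates (U : Set V.carrier) : Prop :=
  Submodule.span ℂ {x : V.carrier | ∃ l : List (V.carrier × ℤ),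
    (∀ p ∈ l, p.1 ∈ U) ∧ x = V.iterApply l V.one} = ⊤

/-- `V` is finitely generated as a vertex operator algebra. -/
def FinitelyGenerated : Prop := ∃ S : Finset V.carrier, V.generates ↑S

end VOA

/-- A weak `V`-module: all axioms of a module (truncation, vacuum, Jacobi identity in
Borcherds form) except those involving gradings. -/
structure WeakModule (V : VOA) where
  carrier : Type
  [grp : AddCommGroup carrier]
  [mdl : Module ℂ carrier]
  op : V.carrier → ℤ → carrier → carrier
  op_linear_left : ∀ (n : ℤ) (w : carrier), IsLinearMap ℂ fun u => op u n w
  op_linear_right : ∀ (u : V.carrier) (n : ℤ), IsLinearMap ℂ (op u n)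
  trunc : ∀ (u : V.carrier) (w : carrier), ∃ N : ℤ, ∀ n : ℤ, N ≤ n → op u n w = 0
  one_op : ∀ (n : ℤ) (w : carrier), op V.one n w = if n = -1 then w else 0
  borcherds : ∀ (u v : V.carrier) (w : carrier) (l m n : ℤ),
    (∑ᶠ i : ℕ, cchoose m i • op (V.op u (l + (i : ℤ)) v) (m + n - (i : ℤ)) w)
      = ∑ᶠ i : ℕ, ((-1 : ℂ) ^ i * cchoose l i) •
          (op u (l + m - (i : ℤ)) (op v (n + (i : ℤ)) w)
            - ((-1 : ℂ) ^ l) • op v (l + n - (i : ℤ)) (op u (m + (i : ℤ)) w))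

attribute [instance] WeakModule.grp WeakModule.mdl

namespace WeakModule

variable {V : VOA} (W : WeakModule V)

/-- `L(0)` acting on a weak module, as a linear map. -/
def L0 : W.carrier →ₗ[ℂ] W.carrier := IsLinearMap.mk' _ (W.op_linear_right V.omega 1)

/-- The `L(0)`-eigenspace of eigenvalue `h`. -/
def eig (h : ℂ) : Submodule ℂ W.carrier :=
  LinearMap.ker (W.L0 - h • (LinearMap.id : W.carrier →ₗ[ℂ] W.carrier))

/-- The coefficient `v*ₙ` of the adjoint vertex operator
`⟨Y*(v,x)α, w⟩ = ⟨α, Y(e^{xL(1)}(-x^{-2})^{L(0)}v, x^{-1})w⟩` acting on the full dual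
space: for `v` homogeneous of weight `h`,
`(v*ₙ α)(w) = (-1)^h Σ_{i≥0} (1/i!) α((L(1)^i v)_{2h-n-i-2} w)`, extended to general
`v` via the weight-space projections. -/
def dmode (v : V.carrier) (n : ℤ) (α : W.carrier → ℂ) (w : W.carrier) : ℂ :=
  ∑ᶠ h : ℤ, ∑ᶠ i : ℕ,
    ((-1 : ℂ) ^ h / (Nat.factorial i : ℂ)) *
      α (W.op ((V.L 1)^[i] (V.proj h v)) (2 * h - n - (i : ℤ) - 2) w)

/-- `D(W) ⊆ W*`: the linear functionals `α` on `W` such that for every `v ∈ V`,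
`Y*(v,x)α ∈ W*((x))`, i.e. `v*ₙ α = 0` for `n` sufficiently large. -/
def DW : Set (W.carrier → ℂ) :=
  {α | IsLinearMap ℂ α ∧
    ∀ v : V.carrier, ∃ N : ℤ, ∀ n : ℤ, N ≤ n → ∀ w : W.carrier, W.dmode v n α w = 0}

/-- A subspace stable under all modes of all vertex operators, i.e. a `V`-submodule. -/
def IsStable (S : Submodule ℂ W.carrier) : Prop :=
  ∀ (v : V.carrier) (n : ℤ), ∀ m ∈ S, W.op v n m ∈ S

/-- An irreducible (nonzero, no proper nonzero stable subspaces) `V`-submodule. -/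
def IsIrreducibleSub (S : Submodule ℂ W.carrier) : Prop :=
  S ≠ ⊥ ∧ W.IsStable S ∧
    ∀ T : Submodule ℂ W.carrier, W.IsStable T → T ≤ S → T = ⊥ ∨ T = S

/-- A stable subspace which is an ordinary module: `L(0)` acts semisimply on it with
finite-dimensional eigenspaces, and for each `h` the eigenvalues `h + m` do not occur
for `m` a sufficiently negative integer. -/
def IsOrdinarySub (S : Submodule ℂ W.carrier) : Prop :=
  S ≤ (⨆ h : ℂ, W.eig h ⊓ S) ∧ (∀ h : ℂ, FiniteDimensional ℂ ↥(W.eig h ⊓ S)) ∧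
    ∀ h : ℂ, ∃ N : ℤ, ∀ m : ℤ, m ≤ N → W.eig (h + (m : ℂ)) ⊓ S = ⊥

/-- The weak module `W` is irreducible. -/
def IsIrreducible : Prop :=
  (⊥ : Submodule ℂ W.carrier) ≠ ⊤ ∧
    ∀ S : Submodule ℂ W.carrier, W.IsStable S → S = ⊥ ∨ S = ⊤

/-- `Cₙ(W) = span{v₋ₙw : v ∈ V, w ∈ W}`. -/
def Cn (n : ℤ) : Submodule ℂ W.carrier :=
  Submodule.span ℂ {x : W.carrier | ∃ (v : V.carrier) (w : W.carrier), x = W.op v (-n) w}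

/-- `B(W) = span(u₋₁W (u ∈ V₊) together with v₀W (v homogeneous, wt v ≥ 2))`. -/
def BW : Submodule ℂ W.carrier :=
  Submodule.span ℂ
    ({x : W.carrier | ∃ v ∈ V.pos, ∃ w : W.carrier, x = W.op v (-1) w}
      ∪ {x : W.carrier | ∃ k : ℤ, 2 ≤ k ∧ ∃ v ∈ V.wtSpace k, ∃ w : W.carrier, x = W.op v 0 w})

/-- Zhu's subspace `O(W) = span{Σ_{i≥0} C(wt v, i) v_{i-2} w}` so that `A(W) = W/O(W)`. -/
def OW : Submodule ℂ W.carrier :=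
  Submodule.span ℂ
    {x : W.carrier | ∃ (k : ℤ) (v : V.carrier), v ∈ V.wtSpace k ∧
      ∃ w : W.carrier, x = ∑ᶠ i : ℕ, cchoose k i • W.op v ((i : ℤ) - 2) w}

/-- A subspace `T ⊇ O(W)` of `W` is closed under the Frenkel–Zhu left and right
`A(V)`-actions `v * w = Σᵢ C(wt v, i) v_{i-1} w` and `w * v = Σᵢ C(wt v - 1, i) v_{i-1} w`;
for `T ⊇ O(W)` this expresses that `T/O(W)` is an `A(V)`-sub-bimodule of `A(W)`. -/
def BimoduleClosed (T : Submodule ℂ W.carrier) : Prop :=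
  ∀ k : ℤ, ∀ v ∈ V.wtSpace k, ∀ w ∈ T,
    (∑ᶠ i : ℕ, cchoose k i • W.op v ((i : ℤ) - 1) w) ∈ T ∧
    (∑ᶠ i : ℕ, cchoose (k - 1) i • W.op v ((i : ℤ) - 1) w) ∈ T

/-- Equivalence (isomorphism) of weak modules. -/
def Equiv (M N : WeakModule V) : Prop :=
  ∃ e : M.carrier ≃ₗ[ℂ] N.carrier,
    ∀ (v : V.carrier) (n : ℤ) (w : M.carrier), e (M.op v n w) = N.op v n (e w)

end WeakModule

/-- `V` is of class 𝒜: `L(0)` acts semisimply on every weak `V`-module. -/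
def VOA.classA (V : VOA) : Prop :=
  ∀ M : WeakModule V, (⨆ h : ℂ, M.eig h) = ⊤

/-- `V` is regular: every weak `V`-module is a direct sum of irreducible ordinary
`V`-modules. -/
def VOA.regular (V : VOA) : Prop :=
  ∀ M : WeakModule V, ∃ (ι : Type) (S : ι → Submodule ℂ M.carrier),
    (∀ i, M.IsIrreducibleSub (S i) ∧ M.IsOrdinarySub (S i)) ∧
    (∀ i, Disjoint (S i) (⨆ (j : ι) (_ : j ≠ i), S j)) ∧ (⨆ i, S i) = ⊤

/-- A generalized `V`-module: a weak module with a semisimple `L(0)`-action, graded by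
the `L(0)`-eigenvalues, with weight-space projections `projW`. -/
structure GenModule (V : VOA) extends WeakModule V where
  wt : ℂ → Submodule ℂ carrier
  projW : ℂ → carrier → carrier
  projW_linear : ∀ h : ℂ, IsLinearMap ℂ (projW h)
  projW_mem : ∀ (h : ℂ) (w : carrier), projW h w ∈ wt h
  projW_eq : ∀ h : ℂ, ∀ w ∈ wt h, projW h w = w
  projW_ne : ∀ g h : ℂ, g ≠ h → ∀ w ∈ wt g, projW h w = 0
  projW_finite : ∀ w : carrier, (Function.support fun h => projW h w).Finite
  projW_sum : ∀ w : carrier, (∑ᶠ h : ℂ, projW h w) = w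
  wt_L0 : ∀ h : ℂ, ∀ w ∈ wt h, op V.omega 1 w = h • w
  wt_op : ∀ k : ℤ, ∀ v ∈ V.wtSpace k, ∀ (h : ℂ) (n : ℤ), ∀ w ∈ wt h,
    op v n w ∈ wt (h + (k : ℂ) - (n : ℂ) - 1)

/-- An ordinary `V`-module: a generalized module whose weight spaces are
finite-dimensional and whose weights are truncated from below in each coset `h + ℤ`. -/
structure OrdModule (V : VOA) extends GenModule V where
  wt_fd : ∀ h : ℂ, FiniteDimensional ℂ ↥(wt h)
  wt_lower : ∀ h : ℂ, ∃ N : ℤ, ∀ m : ℤ, m ≤ N → wt (h + (m : ℂ)) = ⊥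

namespace GenModule

variable {V : VOA} (W : GenModule V)

/-- `W₊ = ⊕_{Re h > 0} W₍ₕ₎`. -/
def posW : Submodule ℂ W.carrier := ⨆ (h : ℂ) (_ : 0 < h.re), W.wt h

/-- `C₁(W) = span(v₋₁W₊ (v ∈ V₊) together with L(-1)W)`. -/
def C1W : Submodule ℂ W.carrier :=
  Submodule.span ℂ
    ({x : W.carrier | ∃ v ∈ V.pos, ∃ w ∈ W.posW, x = W.op v (-1) w}
      ∪ {x : W.carrier | ∃ w : W.carrier, x = W.op V.omega 0 w})

/-- The restricted dual `W' = ⊕ₕ W₍ₕ₎* ⊆ W*`: the linear functionals vanishing on all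
but finitely many weight spaces. -/
def restrictedDual : Set (W.carrier → ℂ) :=
  {α | IsLinearMap ℂ α ∧ {h : ℂ | ∃ w ∈ W.wt h, α w ≠ 0}.Finite}

end GenModule

/-- `D(W)⁰`: the sum of the `L(0)`-eigenspaces of the weak module `D(W) ⊆ W*`, where
`L*(0) = ω*₁` acts on `α ∈ W*` by `(L*(0)α)(w) = α(L(0)w)`. -/
def OrdModule.DW0 {V : VOA} (W : OrdModule V) : Set (W.carrier → ℂ) :=
  {α | ∃ (S : Finset ℂ) (f : ℂ → (W.carrier → ℂ)),
    (∀ h ∈ S, f h ∈ W.toWeakModule.DW ∧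
      ∀ w : W.carrier, f h (W.op V.omega 1 w) = h * f h w) ∧
    α = ∑ h ∈ S, f h}

/-- An ℕ-gradable weak `V`-module: a weak module with an ℕ-grading
`W = ⊕_{n∈ℕ} W(n)` with `v_m W(n) ⊆ W(wt v + n - m - 1)` (graded pieces of negative
index are zero). -/
structure NGradedModule (V : VOA) extends WeakModule V where
  gr : ℤ → Submodule ℂ carrier
  gr_neg : ∀ n : ℤ, n < 0 → gr n = ⊥
  gr_sup : (⨆ n : ℤ, gr n) = ⊤
  gr_indep : ∀ n : ℤ, Disjoint (gr n) (⨆ (m : ℤ) (_ : m ≠ n), gr m)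
  gr_op : ∀ k : ℤ, ∀ v ∈ V.wtSpace k, ∀ m n : ℤ, ∀ w ∈ gr n,
    op v m w ∈ gr (k + n - m - 1)

/-- An intertwining operator of type `(W₃; W₁ W₂)` in the sense of
Frenkel–Huang–Lepowsky, recorded through its complex-indexed modes
`I w₁ h w₂ = (w₁)ₕ w₂` (so `Y(w₁,x)w₂ = Σ_{h∈ℂ} (w₁)ₕ w₂ x^{-h-1}`):
linearity, truncation, the `L(-1)`-derivative property, and the Jacobi identity in
component (Borcherds) form. -/
def IsIntertwiner {V : VOA} (W1 W2 W3 : OrdModule V)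
    (I : W1.carrier → ℂ → W2.carrier → W3.carrier) : Prop :=
  (∀ (h : ℂ) (w2 : W2.carrier), IsLinearMap ℂ fun w1 => I w1 h w2) ∧
  (∀ (w1 : W1.carrier) (h : ℂ), IsLinearMap ℂ (I w1 h)) ∧
  (∀ (w1 : W1.carrier) (w2 : W2.carrier) (h : ℂ),
    ∃ N : ℤ, ∀ n : ℤ, N ≤ n → I w1 (h + (n : ℂ)) w2 = 0) ∧
  (∀ (w1 : W1.carrier) (h : ℂ) (w2 : W2.carrier),
    I (W1.op V.omega 0 w1) h w2 = (-h) • I w1 (h - 1) w2) ∧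
  (∀ (u : V.carrier) (w1 : W1.carrier) (w2 : W2.carrier) (l m : ℤ) (h : ℂ),
    (∑ᶠ i : ℕ, cchoose m i • I (W1.op u (l + (i : ℤ)) w1) ((m : ℂ) + h - (i : ℂ)) w2)
      = ∑ᶠ i : ℕ, ((-1 : ℂ) ^ i * cchoose l i) •
          (W3.op u (l + m - (i : ℤ)) (I w1 (h + (i : ℂ)) w2)
            - ((-1 : ℂ) ^ l) • I w1 ((l : ℂ) + h - (i : ℂ)) (W2.op u (m + (i : ℤ)) w2)))

/-- The fusion rule `dim I(W₃; W₁W₂)` is finite: the space of intertwining operators of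
the indicated type is finite-dimensional. -/
def FusionFinite {V : VOA} (W1 W2 W3 : OrdModule V) : Prop :=
  FiniteDimensional ℂ
    ↥(Submodule.span ℂ {I : W1.carrier → ℂ → W2.carrier → W3.carrier |
        IsIntertwiner W1 W2 W3 I})

end


noncomputable section
namespace ContraAux

theorem cchoose_zero (m : ℤ) : cchoose m 0 = 1 := by simp [cchoose]

theorem cchoose_succ (m : ℤ) (i : ℕ) :
    ((i : ℂ) + 1) * cchoose m (i + 1) = ((m : ℂ) - i) * cchoose m i := by
  have h1 : ((i : ℂ) + 1) ≠ 0 := by exact_mod_cast Nat.succ_ne_zero i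
  have h2 : ((Nat.factorial i : ℕ) : ℂ) ≠ 0 := by exact_mod_cast Nat.factorial_ne_zero i
  unfold cchoose
  rw [Finset.prod_range_succ, Nat.factorial_succ]
  push_cast
  field_simp

theorem cchoose_succ' (m : ℤ) (i : ℕ) :
    ((i : ℂ) + 1) * cchoose m (i + 1) = (m : ℂ) * cchoose (m - 1) i := by
  have h1 : ((i : ℂ) + 1) ≠ 0 := by exact_mod_cast Nat.succ_ne_zero i
  have h2 : ((Nat.factorial i : ℕ) : ℂ) ≠ 0 := by exact_mod_cast Nat.factorial_ne_zero i
  unfold cchoose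
  rw [Finset.prod_range_succ', Nat.factorial_succ]
  have : ∏ k ∈ Finset.range i, ((m : ℂ) - ((k + 1 : ℕ) : ℂ))
      = ∏ k ∈ Finset.range i, (((m - 1 : ℤ) : ℂ) - (k : ℂ)) := by
    apply Finset.prod_congr rfl
    intro k _
    push_cast
    ring
  rw [this]
  push_cast
  field_simp
  simp
  ring

theorem cchoose_pascal (m : ℤ) (i : ℕ) :
    cchoose (m + 1) (i + 1) = cchoose m (i + 1) + cchoose m i := by
  have h1 : ((i : ℂ) + 1) ≠ 0 := by exact_mod_cast Nat.succ_ne_zero i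
  apply mul_left_cancel₀ h1
  rw [cchoose_succ', mul_add, cchoose_succ]
  simp only [add_sub_cancel_right]
  push_cast
  ring

theorem cchoose_zero_succ (i : ℕ) : cchoose 0 (i + 1) = 0 := by
  simp [cchoose, Finset.prod_range_succ']

theorem cchoose_two (i : ℕ) : cchoose 2 (i + 3) = 0 := by
  have : ∏ j ∈ Finset.range (i + 3), (((2 : ℤ) : ℂ) - (j : ℂ)) = 0 :=
    Finset.prod_eq_zero (i := 2) (by simp) (by simp)
  simp [cchoose] at *
  left
  exact this

section triple
variable {M : Type*} [AddCommGroup M] [Module ℂ M]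

/-- Sum over all `(p, q, i)` with `p + q + i = s`. -/
def tri (s : ℕ) (G : ℕ → ℕ → ℕ → M) : M :=
  ∑ x ∈ Finset.HasAntidiagonal.antidiagonal s, ∑ y ∈ Finset.HasAntidiagonal.antidiagonal x.2, G x.1 y.1 y.2

theorem tri_congr {s : ℕ} {G H : ℕ → ℕ → ℕ → M}
    (h : ∀ p q i, p + q + i = s → G p q i = H p q i) : tri s G = tri s H := by
  unfold tri
  apply Finset.sum_congr rfl
  intro x hx
  apply Finset.sum_congr rfl
  intro y hy
  rw [Finset.HasAntidiagonal.mem_antidiagonal] at hx hy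
  exact h _ _ _ (by omega)

theorem tri_add (s : ℕ) (G H : ℕ → ℕ → ℕ → M) :
    tri s (fun p q i => G p q i + H p q i) = tri s G + tri s H := by
  simp [tri, Finset.sum_add_distrib]

theorem tri_smul (s : ℕ) (c : ℂ) (G : ℕ → ℕ → ℕ → M) :
    tri s (fun p q i => c • G p q i) = c • tri s G := by
  simp [tri, Finset.smul_sum]

theorem tri_map {M' : Type*} [AddCommGroup M'] [Module ℂ M'] (f : M →ₗ[ℂ] M') (s : ℕ)
    (G : ℕ → ℕ → ℕ → M) : f (tri s G) = tri s (fun p q i => f (G p q i)) := by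
  simp [tri]

theorem tri_p (s : ℕ) (G : ℕ → ℕ → ℕ → M) (h : ∀ q i, G 0 q i = 0) :
    tri s (fun p q i => G (p + 1) q i) = tri (s + 1) G := by
  simp [tri, Finset.Nat.sum_antidiagonal_succ, h]

theorem tri_q (s : ℕ) (G : ℕ → ℕ → ℕ → M) (h : ∀ p i, G p 0 i = 0) :
    tri s (fun p q i => G p (q + 1) i) = tri (s + 1) G := by
  simp [tri, Finset.Nat.sum_antidiagonal_succ' (n := s), Finset.Nat.sum_antidiagonal_succ, h]

theorem tri_i (s : ℕ) (G : ℕ → ℕ → ℕ → M) (h : ∀ p q, G p q 0 = 0) :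
    tri s (fun p q i => G p q (i + 1)) = tri (s + 1) G := by
  simp [tri, Finset.Nat.sum_antidiagonal_succ', h]

theorem tri_rec (N : ℤ) (s : ℕ) (X : ℕ → ℕ → ℕ → M) :
    ((s : ℂ) + 1) • tri (s + 1) (fun p q i => cchoose (N - p) i • X p q i)
      = tri s (fun p q i => cchoose (N - p) i • (((N : ℂ) - 2 * p - i) • X p q (i + 1)
          + ((p : ℂ) + 1) • X (p + 1) q i + ((q : ℂ) + 1) • X p (q + 1) i)) := by
  have hA := tri_p s (fun p q i => (cchoose (N - p + 1) i * (p : ℂ)) • X p q i) (by simp)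
  have hB := tri_q s (fun p q i => (cchoose (N - p) i * (q : ℂ)) • X p q i) (by simp)
  have hC := tri_i s (fun p q i =>
    (match i with | 0 => 0 | j + 1 => cchoose (N - p) j * ((N : ℂ) - 2 * p - j)) • X p q i)
    (by simp)
  simp only [smul_add, tri_add, smul_smul]
  simp only at hC
  rw [hC]
  have hA' : tri s (fun p q i => (cchoose (N - p) i * ((p : ℂ) + 1)) • X (p + 1) q i)
      = tri (s + 1) (fun p q i => (cchoose (N - p + 1) i * (p : ℂ)) • X p q i) := by
    rw [← hA]
    apply tri_congr
    intro p q i _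
    push_cast
    congr 3
    ring
  have hB' : tri s (fun p q i => (cchoose (N - p) i * ((q : ℂ) + 1)) • X p (q + 1) i)
      = tri (s + 1) (fun p q i => (cchoose (N - p) i * (q : ℂ)) • X p q i) := by
    rw [← hB]
    push_cast
    rfl
  rw [hA', hB', ← tri_smul, ← tri_add, ← tri_add]
  apply tri_congr
  intro p q i hs
  have hs' : (s : ℂ) + 1 = p + q + i := by exact_mod_cast hs.symm
  rw [← add_smul, ← add_smul, smul_smul, hs']
  congr 1
  cases i with
  | zero =>
    simp [cchoose_zero]
  | succ j =>
    have e1 := cchoose_pascal (N - p) j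
    have e2 := cchoose_succ (N - p) j
    simp only
    rw [e1]
    push_cast at e2 ⊢
    linear_combination e2

/-- rearranging a square sum by diagonals -/
theorem sum_diag (K : ℕ) (f : ℕ → ℕ → M) (h : ∀ i r, K ≤ i + r → f i r = 0) :
    ∑ i ∈ Finset.range K, ∑ r ∈ Finset.range K, f i r
      = ∑ s ∈ Finset.range K, ∑ x ∈ Finset.HasAntidiagonal.antidiagonal s, f x.1 x.2 := by
  simp only [Finset.Nat.sum_antidiagonal_eq_sum_range_succ f]
  have := Finset.sum_range_diag_flip K f
  simp only [Nat.succ_eq_add_one]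
  rw [this]
  apply Finset.sum_congr rfl
  intro i _
  symm
  apply Finset.sum_subset
  · intro x
    simp only [Finset.mem_range]
    omega
  · intro x _ hx
    apply h
    simp only [Finset.mem_range] at hx
    omega

theorem sum_tri (K : ℕ) (G : ℕ → ℕ → ℕ → M) (h : ∀ p q i, K ≤ p + q + i → G p q i = 0) :
    ∑ p ∈ Finset.range K, ∑ q ∈ Finset.range K, ∑ i ∈ Finset.range K, G p q i
      = ∑ s ∈ Finset.range K, tri s G := by
  unfold tri
  rw [← sum_diag K (fun p t => ∑ y ∈ Finset.HasAntidiagonal.antidiagonal t, G p y.1 y.2)]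
  · apply Finset.sum_congr rfl
    intro p _
    exact sum_diag K (G p) (fun q i hq => h p q i (by omega))
  · intro p t ht
    apply Finset.sum_eq_zero
    intro y hy
    rw [Finset.HasAntidiagonal.mem_antidiagonal] at hy
    exact h _ _ _ (by omega)

theorem finsum_range (K : ℕ) (f : ℕ → M) (h : ∀ i, K ≤ i → f i = 0) :
    ∑ᶠ i, f i = ∑ i ∈ Finset.range K, f i := by
  apply finsum_eq_sum_of_support_subset
  intro i hi
  by_contra hc
  simp only [Finset.coe_range, Set.mem_Iio, not_lt] at hc
  exact hi (h i hc)

theorem fin_supp (f : ℕ → M) (h : ∃ K, ∀ i, K ≤ i → f i = 0) : (Function.support f).Finite := by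
  obtain ⟨K, h⟩ := h
  apply (Finset.range K).finite_toSet.subset
  intro i hi
  by_contra hc
  simp only [Finset.coe_range, Set.mem_Iio, not_lt] at hc
  exact hi (h i hc)

end triple

section V
variable (V : VOA)

/-- `V.op` as a bilinear map -/
def vop (n : ℤ) : V.carrier →ₗ[ℂ] V.carrier →ₗ[ℂ] V.carrier :=
  LinearMap.mk₂ ℂ (fun u v => V.op u n v)
    (fun a b v => (V.op_linear_left n v).map_add a b)
    (fun c a v => (V.op_linear_left n v).map_smul c a)
    (fun a b v => (V.op_linear_right a n).map_add b v)
    (fun c a v => (V.op_linear_right a n).map_smul c v)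

theorem vop_eq (n : ℤ) (u v : V.carrier) : V.op u n v = vop V n u v := rfl

/-- `L(1)` as a linear map -/
def L1 : V.carrier →ₗ[ℂ] V.carrier := vop V 2 V.omega

theorem L_one_eq : V.L 1 = L1 V := by
  funext v
  rfl

/-- divided powers of `L(1)` -/
def P (p : ℕ) : V.carrier →ₗ[ℂ] V.carrier := ((Nat.factorial p : ℂ)⁻¹) • (L1 V) ^ p

theorem P_apply (p : ℕ) (u : V.carrier) :
    P V p u = ((Nat.factorial p : ℂ)⁻¹) • (V.L 1)^[p] u := by
  rw [L_one_eq, ← Module.End.pow_apply]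
  rfl

theorem P_zero (u : V.carrier) : P V 0 u = u := by simp [P]

theorem L1_P (p : ℕ) (u : V.carrier) : L1 V (P V p u) = ((p : ℂ) + 1) • P V (p + 1) u := by
  have h1 : ((p : ℂ) + 1) ≠ 0 := by exact_mod_cast Nat.succ_ne_zero p
  simp only [P, LinearMap.smul_apply, map_smul, pow_succ', Module.End.mul_apply, smul_smul,
    Nat.factorial_succ]
  congr 1
  push_cast
  field_simp

theorem L1_wt (h : ℤ) (u : V.carrier) (hu : u ∈ V.wtSpace h) : L1 V u ∈ V.wtSpace (h - 1) := by
  have := V.op_wt 2 h 2 _ V.omega_wt u hu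
  have e : (2 + h - 2 - 1 : ℤ) = h - 1 := by ring
  rw [e] at this
  exact this

theorem P_wt (p : ℕ) (h : ℤ) (u : V.carrier) (hu : u ∈ V.wtSpace h) :
    P V p u ∈ V.wtSpace (h - p) := by
  apply Submodule.smul_mem
  induction p with
  | zero => simpa using hu
  | succ p ih =>
    rw [pow_succ', Module.End.mul_apply]
    have := L1_wt V _ _ ih
    convert this using 2
    push_cast
    ring

theorem L1_comm (h n : ℤ) (u v : V.carrier) (hu : u ∈ V.wtSpace h) :
    L1 V (V.op u n v) = (2 * (h : ℂ) - n - 2) • V.op u (n + 1) v + V.op (L1 V u) n v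
      + V.op u n (L1 V v) := by
  have hb := V.borcherds V.omega u v 0 2 n
  rw [finsum_range 3, finsum_range 1] at hb
  · simp only [Finset.sum_range_succ, Finset.sum_range_zero, cchoose_zero] at hb
    have c1 : cchoose 2 1 = 2 := by simp [cchoose]
    have c2 : cchoose 2 2 = 1 := by simp [cchoose, Finset.prod_range_succ]; norm_num
    rw [c1, c2] at hb
    simp only [Nat.cast_zero, Nat.cast_one, Nat.cast_ofNat, add_zero, zero_add, sub_zero,
      pow_zero, zpow_zero, one_smul, one_mul] at hb
    rw [V.L_neg_one, V.L_zero h u hu, vop_eq V _ ((h : ℂ) • u)] at hb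
    simp only [map_smul, LinearMap.smul_apply, ← vop_eq] at hb
    have e1 : (2 + n - 1 : ℤ) = n + 1 := by ring
    have e2 : (2 + n - 2 : ℤ) = n := by ring
    rw [e1, e2] at hb
    have : L1 V (V.op u n v) - V.op u n (L1 V v) = _ := hb.symm
    rw [sub_eq_iff_eq_add] at this
    rw [this]
    congr 1
    show _ + V.op (L1 V u) n v = _
    congr 1
    rw [smul_smul, ← add_smul]
    congr 1
    push_cast
    ring
  · intro i hi
    obtain ⟨j, rfl⟩ := Nat.exists_eq_add_of_le' hi
    simp [cchoose_zero_succ]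
  · intro i hi
    obtain ⟨j, rfl⟩ := Nat.exists_eq_add_of_le' hi
    simp [cchoose_two]

/-- left hand side of the `L(1)`-conjugation identity -/
def lhsS (u v : V.carrier) (s : ℕ) (l m : ℤ) : V.carrier :=
  ∑ x ∈ Finset.HasAntidiagonal.antidiagonal s,
    ((-1 : ℂ) ^ x.1 * cchoose m x.1) • P V x.2 (V.op u (l + (x.1 : ℤ)) v)

theorem lhs_rec (u v : V.carrier) (s : ℕ) (l m : ℤ) :
    ((s : ℂ) + 1) • lhsS V u v (s + 1) l m
      = L1 V (lhsS V u v s l m) - (m : ℂ) • lhsS V u v s (l + 1) (m - 1) := by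
  have h1 : ((s : ℂ) + 1) • lhsS V u v (s + 1) l m
      = ∑ x ∈ Finset.HasAntidiagonal.antidiagonal (s + 1), ((-1 : ℂ) ^ x.1 * cchoose m x.1 * (x.2 : ℂ)) •
          P V x.2 (V.op u (l + (x.1 : ℤ)) v)
       + ∑ x ∈ Finset.HasAntidiagonal.antidiagonal (s + 1), ((-1 : ℂ) ^ x.1 * cchoose m x.1 * (x.1 : ℂ)) •
          P V x.2 (V.op u (l + (x.1 : ℤ)) v) := by
    rw [← Finset.sum_add_distrib, lhsS, Finset.smul_sum]
    apply Finset.sum_congr rfl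
    intro x hx
    rw [Finset.HasAntidiagonal.mem_antidiagonal] at hx
    have hs' : (s : ℂ) + 1 = x.1 + x.2 := by exact_mod_cast hx.symm
    rw [smul_smul, ← add_smul, hs']
    congr 1
    ring
  rw [h1, Finset.Nat.sum_antidiagonal_succ', Finset.Nat.sum_antidiagonal_succ]
  simp only [Nat.cast_zero, mul_zero, zero_smul, zero_add, add_zero]
  rw [sub_eq_add_neg]
  congr 1
  · rw [lhsS, map_sum]
    apply Finset.sum_congr rfl
    intro x _
    rw [map_smul, L1_P, smul_smul]
    push_cast
    rfl
  · rw [lhsS, Finset.smul_sum, ← Finset.sum_neg_distrib]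
    apply Finset.sum_congr rfl
    intro x _
    rw [smul_smul, ← neg_smul]
    have := cchoose_succ' m x.1
    have e : l + ((x.1 + 1 : ℕ) : ℤ) = l + 1 + (x.1 : ℤ) := by push_cast; ring
    rw [e]
    congr 1
    push_cast
    rw [pow_succ]
    linear_combination -(-1 : ℂ) ^ x.1 * this

/-- right hand side of the `L(1)`-conjugation identity -/
def rhsS (h : ℤ) (u v : V.carrier) (s : ℕ) (l m : ℤ) : V.carrier :=
  tri s (fun p q i => cchoose (2 * h - 2 - m - l - p) i •
    V.op (P V p u) (l + (i : ℤ)) (P V q v))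

theorem rhs_rec (h : ℤ) (u v : V.carrier) (hu : u ∈ V.wtSpace h) (s : ℕ) (l m : ℤ) :
    ((s : ℂ) + 1) • rhsS V h u v (s + 1) l m
      = L1 V (rhsS V h u v s l m) - (m : ℂ) • rhsS V h u v s (l + 1) (m - 1) := by
  unfold rhsS
  have hsub : ∀ a b : V.carrier, a - (m : ℂ) • b = a + (-(m : ℂ)) • b := by
    intro a b
    module
  rw [tri_rec, tri_map, hsub, ← tri_smul, ← tri_add]
  apply tri_congr
  intro p q i _
  have e : l + 1 + (i : ℤ) = l + ((i + 1 : ℕ) : ℤ) := by push_cast; ring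
  have e' : l + (i : ℤ) + 1 = l + ((i + 1 : ℕ) : ℤ) := by push_cast; ring
  have e2 : 2 * h - 2 - (m - 1) - (l + 1) - (p : ℤ) = 2 * h - 2 - m - l - p := by ring
  rw [e, e2, map_smul, L1_comm V (h - p) _ _ _ (P_wt V p h u hu), L1_P, L1_P, e']
  simp only [vop_eq, map_smul, LinearMap.smul_apply]
  push_cast
  module

theorem conj_id (h : ℤ) (u v : V.carrier) (hu : u ∈ V.wtSpace h) (s : ℕ) :
    ∀ (l m : ℤ), lhsS V u v s l m = rhsS V h u v s l m := by
  induction s with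
  | zero =>
    intro l m
    simp [lhsS, rhsS, tri, P_zero, cchoose_zero]
  | succ s ih =>
    intro l m
    have h1 : ((s : ℂ) + 1) ≠ 0 := by exact_mod_cast Nat.succ_ne_zero s
    apply smul_right_injective _ h1
    simp only
    rw [lhs_rec, rhs_rec V h u v hu, ih, ih]

end V

end ContraAux
end

noncomputable section
namespace ContraAux

section W
variable {V : VOA}

theorem hom_ind (p : V.carrier → Prop) (h0 : p 0) (hadd : ∀ a b, p a → p b → p (a + b))
    (hhom : ∀ h : ℤ, ∀ u ∈ V.wtSpace h, p u) : ∀ u, p u := by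
  intro u
  rw [← V.proj_sum u, finsum_eq_sum _ (V.proj_finite u)]
  exact Finset.sum_induction _ p hadd h0 (fun h _ => hhom h _ (V.proj_mem h u))

theorem wt_van (h : ℤ) : ∃ K : ℕ, ∀ i : ℕ, K ≤ i → ∀ u ∈ V.wtSpace (h - i), u = 0 := by
  obtain ⟨N, hN⟩ := V.lower_trunc
  refine ⟨(h - N + 1).toNat, fun i hi u hu => ?_⟩
  rw [hN _ (by omega)] at hu
  simpa using hu

theorem P_van (u : V.carrier) : ∃ K : ℕ, ∀ i : ℕ, K ≤ i → P V i u = 0 := by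
  revert u
  apply hom_ind
  · exact ⟨0, by simp⟩
  · rintro a b ⟨K, hK⟩ ⟨K', hK'⟩
    refine ⟨max K K', fun i hi => ?_⟩
    rw [map_add, hK i (by omega), hK' i (by omega), add_zero]
  · intro h u hu
    obtain ⟨K, hK⟩ := wt_van (V := V) h
    exact ⟨K, fun i hi => hK i hi _ (P_wt V i h u hu)⟩

theorem unif {p : ℕ → ℤ → Prop} (K : ℕ) (h : ∀ i < K, ∃ N : ℤ, ∀ n, N ≤ n → p i n) :
    ∃ N : ℤ, ∀ n, N ≤ n → ∀ i < K, p i n := by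
  induction K with
  | zero => exact ⟨0, by simp⟩
  | succ K ih =>
    obtain ⟨N, hN⟩ := ih (fun i hi => h i (by omega))
    obtain ⟨N', hN'⟩ := h K (by omega)
    refine ⟨max N N', fun n hn i hi => ?_⟩
    rcases Nat.lt_succ_iff_lt_or_eq.1 hi with hi | rfl
    · exact hN n (by omega) i hi
    · exact hN' n (by omega)

variable (W : WeakModule V)

/-- `W.op` as a bilinear map -/
def wop (n : ℤ) : V.carrier →ₗ[ℂ] W.carrier →ₗ[ℂ] W.carrier :=
  LinearMap.mk₂ ℂ (fun u v => W.op u n v)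
    (fun a b v => (W.op_linear_left n v).map_add a b)
    (fun c a v => (W.op_linear_left n v).map_smul c a)
    (fun a b v => (W.op_linear_right a n).map_add b v)
    (fun c a v => (W.op_linear_right a n).map_smul c v)

theorem wop_eq (n : ℤ) (u : V.carrier) (v : W.carrier) : W.op u n v = wop W n u v := rfl

theorem Thh_supp (h n : ℤ) (u : V.carrier) (w : W.carrier) :
    (Function.support fun i : ℕ => (-1 : ℂ) ^ h • wop W (2 * h - n - i - 2) (P V i u) w).Finite := by
  apply fin_supp
  obtain ⟨K, hK⟩ := P_van u
  exact ⟨K, fun i hi => by simp [hK i hi]⟩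

/-- the adjoint modes on a homogeneous piece -/
def Thh (h n : ℤ) : V.carrier →ₗ[ℂ] W.carrier →ₗ[ℂ] W.carrier :=
  LinearMap.mk₂ ℂ
    (fun u w => ∑ᶠ i : ℕ, (-1 : ℂ) ^ h • wop W (2 * h - n - i - 2) (P V i u) w)
    (fun a b v => by
      rw [← finsum_add_distrib (Thh_supp W h n a v) (Thh_supp W h n b v)]
      simp)
    (fun c a v => by
      rw [smul_finsum]
      simp [smul_comm c])
    (fun a b v => by
      rw [← finsum_add_distrib (Thh_supp W h n a b) (Thh_supp W h n a v)]
      simp)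
    (fun c a v => by
      rw [smul_finsum]
      simp [smul_comm c])

theorem Thh_eq (h n : ℤ) (u : V.carrier) (w : W.carrier) :
    Thh W h n u w = ∑ᶠ i : ℕ, (-1 : ℂ) ^ h • wop W (2 * h - n - i - 2) (P V i u) w := rfl

theorem Thh_range (h n : ℤ) (u : V.carrier) (w : W.carrier) (K : ℕ)
    (hK : ∀ i : ℕ, K ≤ i → P V i u = 0) :
    Thh W h n u w
      = ∑ i ∈ Finset.range K, (-1 : ℂ) ^ h • wop W (2 * h - n - i - 2) (P V i u) w := by
  rw [Thh_eq]
  apply finsum_range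
  intro i hi
  simp [hK i hi]

theorem Th_supp (n : ℤ) (u : V.carrier) (w : W.carrier) :
    (Function.support fun h : ℤ => Thh W h n (V.proj h u) w).Finite := by
  apply (V.proj_finite u).subset
  intro h hh hc
  apply hh
  simp only at hc ⊢
  rw [hc]
  simp

/-- the adjoint modes -/
def Th (n : ℤ) : V.carrier →ₗ[ℂ] W.carrier →ₗ[ℂ] W.carrier :=
  LinearMap.mk₂ ℂ
    (fun u w => ∑ᶠ h : ℤ, Thh W h n (V.proj h u) w)
    (fun a b v => by
      rw [← finsum_add_distrib (Th_supp W n a v) (Th_supp W n b v)]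
      simp [(V.proj_linear _).map_add])
    (fun c a v => by
      rw [smul_finsum]
      simp [(V.proj_linear _).map_smul])
    (fun a b v => by
      rw [← finsum_add_distrib (Th_supp W n a b) (Th_supp W n a v)]
      simp)
    (fun c a v => by
      rw [smul_finsum]
      simp)

theorem Th_eq (n : ℤ) (u : V.carrier) (w : W.carrier) :
    Th W n u w = ∑ᶠ h : ℤ, Thh W h n (V.proj h u) w := rfl

theorem Th_hom (h n : ℤ) (u : V.carrier) (hu : u ∈ V.wtSpace h) (w : W.carrier) :
    Th W n u w = Thh W h n u w := by
  rw [Th_eq, finsum_eq_single _ h, V.proj_eq h u hu]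
  intro k hk
  rw [V.proj_ne h k (Ne.symm hk) u hu]
  simp

theorem dmode_eq (v : V.carrier) (n : ℤ) (α : W.carrier →ₗ[ℂ] ℂ) (w : W.carrier) :
    W.dmode v n α w = α (Th W n v w) := by
  have h1 := map_finsum α (Th_supp W n v w)
  rw [Th_eq, h1]
  unfold WeakModule.dmode
  apply finsum_congr
  intro h
  have h2 := map_finsum α (Thh_supp W h n (V.proj h v) w)
  rw [Thh_eq, h2]
  apply finsum_congr
  intro i
  rw [P_apply]
  simp only [map_smul, LinearMap.smul_apply, smul_eq_mul, ← wop_eq]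
  ring

theorem Th_trunc (u : V.carrier) (w : W.carrier) : ∃ N : ℤ, ∀ n ≤ N, Th W n u w = 0 := by
  revert u
  apply hom_ind
  · exact ⟨0, by simp⟩
  · rintro a b ⟨K, hK⟩ ⟨K', hK'⟩
    refine ⟨min K K', fun i hi => ?_⟩
    rw [map_add, LinearMap.add_apply, hK i (by omega), hK' i (by omega), add_zero]
  · intro h u hu
    obtain ⟨K, hK⟩ := P_van u
    obtain ⟨N, hN⟩ := unif (p := fun i n => W.op (P V i u) n w = 0) K
      (fun i _ => W.trunc _ _)
    refine ⟨2 * h - K - 2 - N, fun n hn => ?_⟩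
    rw [Th_hom W h n u hu, Thh_range W h n u w K hK]
    apply Finset.sum_eq_zero
    intro i hi
    rw [Finset.mem_range] at hi
    rw [← wop_eq, hN _ (by omega) i hi, smul_zero]

theorem neg_one_zpow_neg (l : ℤ) : (-1 : ℂ) ^ (-l) = (-1) ^ l := by
  rw [zpow_neg, ← inv_zpow]
  norm_num

theorem neg_one_zpow_mul (l : ℤ) : (-1 : ℂ) ^ l * (-1) ^ l = 1 := by
  rw [← mul_zpow]
  norm_num

theorem rhs_term_supp (u v : V.carrier) (w : W.carrier) (l m n : ℤ) :
    (Function.support fun i : ℕ => ((-1 : ℂ) ^ i * cchoose l i) •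
          (W.op u (l + m - (i : ℤ)) (W.op v (n + (i : ℤ)) w)
            - ((-1 : ℂ) ^ l) • W.op v (l + n - (i : ℤ)) (W.op u (m + (i : ℤ)) w))).Finite := by
  apply fin_supp
  obtain ⟨A, hA⟩ := W.trunc u w
  obtain ⟨B, hB⟩ := W.trunc v w
  refine ⟨(A - m).toNat + (B - n).toNat, fun i hi => ?_⟩
  rw [hA _ (by omega), hB _ (by omega)]
  simp [wop_eq]

theorem borch_hom (h k : ℤ) (u v : V.carrier) (hu : u ∈ V.wtSpace h) (hv : v ∈ V.wtSpace k)
    (w : W.carrier) (l m n : ℤ) :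
    (∑ᶠ i : ℕ, cchoose m i • Th W (m + n - (i : ℤ)) (V.op u (l + (i : ℤ)) v) w)
      = ∑ᶠ i : ℕ, ((-1 : ℂ) ^ i * cchoose l i) •
          (Th W (n + (i : ℤ)) v (Th W (l + m - (i : ℤ)) u w)
            - ((-1 : ℂ) ^ l) • Th W (m + (i : ℤ)) u (Th W (l + n - (i : ℤ)) v w)) := by
  obtain ⟨K1, hK1⟩ := P_van u
  obtain ⟨K2, hK2⟩ := P_van v
  obtain ⟨K3, hK3⟩ := wt_van (V := V) (h + k - l - 1)
  obtain ⟨K, hKe⟩ : ∃ K, K = K1 + K2 + K3 := ⟨_, rfl⟩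
  have hKu : ∀ i : ℕ, K ≤ i → P V i u = 0 := fun i hi => hK1 i (by omega)
  have hKv : ∀ i : ℕ, K ≤ i → P V i v = 0 := fun i hi => hK2 i (by omega)
  have hKT : ∀ p q i : ℕ, K ≤ p + q + i → V.op (P V p u) (l + i) (P V q v) = 0 := by
    intro p q i hi
    apply hK3 (p + q + i) (by omega)
    have := V.op_wt _ _ (l + i) _ (P_wt V p h u hu) _ (P_wt V q k v hv)
    convert this using 2
    push_cast
    ring
  have huv : ∀ i : ℕ, V.op u (l + i) v ∈ V.wtSpace (h + k - (l + i) - 1) :=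
    fun i => V.op_wt _ _ (l + i) _ hu _ hv
  have hKL : ∀ i r : ℕ, K ≤ i + r → P V r (V.op u (l + i) v) = 0 := by
    intro i r hi
    apply hK3 (i + r) (by omega)
    have := P_wt V r _ _ (huv i)
    convert this using 2
    push_cast
    ring
  have hKL0 : ∀ i : ℕ, K ≤ i → V.op u (l + i) v = 0 := by
    intro i hi
    have := hKL i 0 (by omega)
    rwa [P_zero] at this
  obtain ⟨c, hc⟩ : ∃ c : ℂ, c = - ((-1) ^ h * (-1) ^ k * (-1) ^ l) := ⟨_, rfl⟩
  obtain ⟨E, hE⟩ : ∃ E : ℤ, E = 2 * (h + k - l) - 4 - m - n := ⟨_, rfl⟩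
  have hL : (∑ᶠ i : ℕ, cchoose m i • Th W (m + n - (i : ℤ)) (V.op u (l + (i : ℤ)) v) w)
      = ∑ s ∈ Finset.range K, c • wop W (E - s) (lhsS V u v s l m) w := by
    rw [finsum_range K]
    · have : ∀ i ∈ Finset.range K,
          cchoose m i • Th W (m + n - (i : ℤ)) (V.op u (l + (i : ℤ)) v) w
          = ∑ r ∈ Finset.range K, (c * ((-1) ^ i * cchoose m i)) •
            wop W (E - (i + r : ℕ)) (P V r (V.op u (l + i) v)) w := by
        intro i _
        rw [Th_hom W _ _ _ (huv i), Thh_range W _ _ _ _ K (fun r hr => hKL i r (by omega)),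
          Finset.smul_sum]
        apply Finset.sum_congr rfl
        intro r _
        rw [smul_smul]
        have e1 : 2 * (h + k - (l + (i : ℤ)) - 1) - (m + n - i) - r - 2 = E - (i + r : ℕ) := by
          rw [hE]
          push_cast
          ring
        have e2 : (-1 : ℂ) ^ (h + k - (l + (i : ℤ)) - 1) = c * (-1) ^ i := by
          have h1 : (-1 : ℂ) ≠ 0 := by norm_num
          have e3 : h + k - (l + (i : ℤ)) - 1 = h + k + (-l) + (-(i : ℤ)) + (-1) := by ring
          rw [e3, zpow_add₀ h1, zpow_add₀ h1, zpow_add₀ h1, zpow_add₀ h1, neg_one_zpow_neg,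
            neg_one_zpow_neg, hc, zpow_natCast]
          norm_num
        rw [e1, e2]
        congr 1
        ring
      rw [Finset.sum_congr rfl this, sum_diag K
        (fun i r => (c * ((-1) ^ i * cchoose m i)) •
            wop W (E - (i + r : ℕ)) (P V r (V.op u (l + i) v)) w)]
      · apply Finset.sum_congr rfl
        intro s _
        unfold lhsS
        rw [map_sum, LinearMap.sum_apply, Finset.smul_sum]
        apply Finset.sum_congr rfl
        intro x hx
        rw [Finset.HasAntidiagonal.mem_antidiagonal] at hx
        rw [hx, map_smul, LinearMap.smul_apply, smul_smul]
      · intro i r hi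
        rw [hKL i r hi]
        simp
    · intro i hi
      rw [hKL0 i hi]
      simp
  rw [hL]
  have hR : ∀ a : ℕ, ((-1 : ℂ) ^ a * cchoose l a) •
          (Th W (n + (a : ℤ)) v (Th W (l + m - (a : ℤ)) u w)
            - ((-1 : ℂ) ^ l) • Th W (m + (a : ℤ)) u (Th W (l + n - (a : ℤ)) v w))
      = ∑ p ∈ Finset.range K, ∑ q ∈ Finset.range K, c • (((-1 : ℂ) ^ a * cchoose l a) •
          (W.op (P V p u) (l + (2 * h - 2 - m - l - p) - (a : ℤ))
              (W.op (P V q v) ((2 * k - 2 - n - l - q) + (a : ℤ)) w)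
            - ((-1 : ℂ) ^ l) • W.op (P V q v) (l + (2 * k - 2 - n - l - q) - (a : ℤ))
              (W.op (P V p u) ((2 * h - 2 - m - l - p) + (a : ℤ)) w))) := by
    intro a
    simp only [Th_hom W h _ u hu, Th_hom W k _ v hv, Thh_range W h _ u _ K hKu,
      Thh_range W k _ v _ K hKv]
    simp only [map_sum, map_smul, Finset.smul_sum]
    rw [Finset.sum_comm]
    simp only [← Finset.sum_sub_distrib, Finset.smul_sum]
    apply Finset.sum_congr rfl
    intro p _
    apply Finset.sum_congr rfl
    intro q _
    have e1 : 2 * k - (n + (a : ℤ)) - q - 2 = l + (2 * k - 2 - n - l - q) - a := by ring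
    have e2 : 2 * h - (l + m - (a : ℤ)) - p - 2 = 2 * h - 2 - m - l - p + a := by ring
    have e3 : 2 * h - (m + (a : ℤ)) - p - 2 = l + (2 * h - 2 - m - l - p) - a := by ring
    have e4 : 2 * k - (l + n - (a : ℤ)) - q - 2 = 2 * k - 2 - n - l - q + a := by ring
    rw [e1, e2, e3, e4, hc]
    simp only [wop_eq]
    have e5 := neg_one_zpow_mul l
    generalize (-1 : ℂ) ^ l = x at *
    generalize (-1 : ℂ) ^ h = y at *
    generalize (-1 : ℂ) ^ k = z at *
    match_scalars
    · linear_combination (-(-1 : ℂ) ^ a * cchoose l a * y * z) * e5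
    · ring
  rw [finsum_congr hR]
  have hs : ∀ p q : ℕ, (Function.support fun a : ℕ => c • (((-1 : ℂ) ^ a * cchoose l a) •
          (W.op (P V p u) (l + (2 * h - 2 - m - l - p) - (a : ℤ))
              (W.op (P V q v) ((2 * k - 2 - n - l - q) + (a : ℤ)) w)
            - ((-1 : ℂ) ^ l) • W.op (P V q v) (l + (2 * k - 2 - n - l - q) - (a : ℤ))
              (W.op (P V p u) ((2 * h - 2 - m - l - p) + (a : ℤ)) w)))).Finite := by
    intro p q
    apply (rhs_term_supp W (P V p u) (P V q v) w l (2 * h - 2 - m - l - p)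
      (2 * k - 2 - n - l - q)).subset
    intro a ha hz
    apply ha
    simp only at hz ⊢
    rw [hz, smul_zero]
  rw [finsum_sum_comm]
  · have : ∀ p ∈ Finset.range K, (∑ᶠ a : ℕ, ∑ q ∈ Finset.range K,
        c • (((-1 : ℂ) ^ a * cchoose l a) •
          (W.op (P V p u) (l + (2 * h - 2 - m - l - p) - (a : ℤ))
              (W.op (P V q v) ((2 * k - 2 - n - l - q) + (a : ℤ)) w)
            - ((-1 : ℂ) ^ l) • W.op (P V q v) (l + (2 * k - 2 - n - l - q) - (a : ℤ))
              (W.op (P V p u) ((2 * h - 2 - m - l - p) + (a : ℤ)) w))))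
        = ∑ q ∈ Finset.range K, ∑ i ∈ Finset.range K,
            c • cchoose (2 * h - 2 - m - l - p) i •
            wop W (E - (p + q + i : ℕ)) (V.op (P V p u) (l + i) (P V q v)) w := by
      intro p _
      rw [finsum_sum_comm _ _ (fun q _ => hs p q)]
      apply Finset.sum_congr rfl
      intro q _
      rw [← smul_finsum, ← W.borcherds, finsum_range K, Finset.smul_sum]
      · apply Finset.sum_congr rfl
        intro i _
        have e1 : 2 * h - 2 - m - l - (p : ℤ) + (2 * k - 2 - n - l - q) - i
            = E - (p + q + i : ℕ) := by
          rw [hE]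
          push_cast
          ring
        rw [e1, wop_eq]
      · intro i hi
        rw [hKT p q i (by omega), wop_eq]
        simp
    rw [Finset.sum_congr rfl this, sum_tri]
    · apply Finset.sum_congr rfl
      intro s _
      rw [conj_id V h u v hu]
      unfold rhsS
      have := tri_map (c • (wop W (E - s)).flip w) s (fun p q i =>
        cchoose (2 * h - 2 - m - l - p) i • V.op (P V p u) (l + (i : ℤ)) (P V q v))
      simp only [LinearMap.smul_apply, LinearMap.flip_apply] at this
      rw [this]
      apply tri_congr
      intro p q i hi
      rw [hi]
      simp
    · intro p q i hi
      rw [hKT p q i hi]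
      simp
  · intro p _
    apply Set.Finite.subset ((Finset.range K).finite_toSet.biUnion (fun q _ => hs p q))
    intro a ha
    simp only [Set.mem_iUnion]
    by_contra hcon
    push Not at hcon
    apply ha
    apply Finset.sum_eq_zero
    intro q hq
    have := hcon q hq
    exact Function.notMem_support.1 this

theorem lhs_supp (u v : V.carrier) (w : W.carrier) (l m n : ℤ) : (Function.support
    fun i : ℕ => cchoose m i • Th W (m + n - (i : ℤ)) (V.op u (l + (i : ℤ)) v) w).Finite := by
  apply fin_supp
  obtain ⟨A, hA⟩ := V.trunc u v
  refine ⟨(A - l).toNat, fun i hi => ?_⟩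
  rw [hA _ (by omega)]
  simp

theorem rhs_supp (u v : V.carrier) (w : W.carrier) (l m n : ℤ) : (Function.support
    fun i : ℕ => ((-1 : ℂ) ^ i * cchoose l i) •
          (Th W (n + (i : ℤ)) v (Th W (l + m - (i : ℤ)) u w)
            - ((-1 : ℂ) ^ l) • Th W (m + (i : ℤ)) u (Th W (l + n - (i : ℤ)) v w))).Finite := by
  apply fin_supp
  obtain ⟨A, hA⟩ := Th_trunc W u w
  obtain ⟨B, hB⟩ := Th_trunc W v w
  refine ⟨(l + m - A).toNat + (l + n - B).toNat, fun i hi => ?_⟩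
  rw [hA _ (by omega), hB _ (by omega)]
  simp

theorem borch (u v : V.carrier) (w : W.carrier) (l m n : ℤ) :
    (∑ᶠ i : ℕ, cchoose m i • Th W (m + n - (i : ℤ)) (V.op u (l + (i : ℤ)) v) w)
      = ∑ᶠ i : ℕ, ((-1 : ℂ) ^ i * cchoose l i) •
          (Th W (n + (i : ℤ)) v (Th W (l + m - (i : ℤ)) u w)
            - ((-1 : ℂ) ^ l) • Th W (m + (i : ℤ)) u (Th W (l + n - (i : ℤ)) v w)) := by
  revert u
  apply hom_ind
  · simp [vop_eq]
  · intro a b ha hb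
    have h1 := finsum_add_distrib (lhs_supp W a v w l m n) (lhs_supp W b v w l m n)
    have h2 := finsum_add_distrib (rhs_supp W a v w l m n) (rhs_supp W b v w l m n)
    rw [ha, hb, ← h2] at h1
    convert h1 using 3 with i i
    · simp [vop_eq]
    · simp only [map_add, LinearMap.add_apply]
      module
  · intro h u hu
    revert v
    apply hom_ind
    · simp [vop_eq]
    · intro a b ha hb
      have h1 := finsum_add_distrib (lhs_supp W u a w l m n) (lhs_supp W u b w l m n)
      have h2 := finsum_add_distrib (rhs_supp W u a w l m n) (rhs_supp W u b w l m n)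
      rw [ha, hb, ← h2] at h1
      convert h1 using 3 with i i
      · simp [vop_eq]
      · simp only [map_add, LinearMap.add_apply]
        module
    · intro k v hv
      exact borch_hom W h k u v hu hv w l m n

theorem Th_one (n : ℤ) (w : W.carrier) : Th W n V.one w = if n = -1 then w else 0 := by
  have hP : ∀ i : ℕ, 1 ≤ i → P V i V.one = 0 := by
    intro i hi
    obtain ⟨j, rfl⟩ := Nat.exists_eq_add_of_le' hi
    have : L1 V V.one = 0 := V.create_nonneg _ 2 (by norm_num)
    simp [P, pow_succ, this]
  rw [Th_hom W 0 n _ V.one_wt, Thh_range W 0 n _ w 1 hP]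
  simp only [Finset.range_one, Finset.sum_singleton, zpow_zero, one_smul, P_zero, ← wop_eq,
    W.one_op]
  apply if_congr _ rfl rfl
  push_cast
  omega

theorem Th_omega (w : W.carrier) : Th W 1 V.omega w = W.op V.omega 1 w := by
  have h1 : L1 V V.omega = 0 := by
    have hv := V.virasoro 1 (-2) V.one
    norm_num at hv
    rw [V.create, V.create_nonneg _ 2 (by norm_num), V.create_nonneg _ 0 (by norm_num)] at hv
    simpa [vop_eq, L1] using hv
  have hP : ∀ i : ℕ, 1 ≤ i → P V i V.omega = 0 := by
    intro i hi
    obtain ⟨j, rfl⟩ := Nat.exists_eq_add_of_le' hi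
    simp [P, pow_succ, h1]
  rw [Th_hom W 2 1 _ V.omega_wt, Thh_range W 2 1 _ w 1 hP]
  simp [P_zero, ← wop_eq]

end W

end ContraAux
end

noncomputable section
namespace ContraAux

section D
variable {V : VOA} (W : WeakModule V)

/-- `D(W)` as a submodule of the full linear dual -/
def Dsub : Submodule ℂ (W.carrier →ₗ[ℂ] ℂ) where
  carrier := {α | ∀ v : V.carrier, ∃ N : ℤ, ∀ n : ℤ, N ≤ n → ∀ w, α (Th W n v w) = 0}
  zero_mem' := fun v => ⟨0, by simp⟩
  add_mem' := by
    intro α β ha hb v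
    obtain ⟨N, hN⟩ := ha v
    obtain ⟨N', hN'⟩ := hb v
    refine ⟨max N N', fun n hn w => ?_⟩
    rw [LinearMap.add_apply, hN n (by omega), hN' n (by omega), add_zero]
  smul_mem' := by
    intro c α ha v
    obtain ⟨N, hN⟩ := ha v
    refine ⟨N, fun n hn w => ?_⟩
    rw [LinearMap.smul_apply, hN n hn, smul_zero]

theorem mem_Dsub (α : W.carrier →ₗ[ℂ] ℂ) : α ∈ Dsub W ↔
    ∀ v : V.carrier, ∃ N : ℤ, ∀ n : ℤ, N ≤ n → ∀ w, α (Th W n v w) = 0 := Iff.rfl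

theorem Dsub_closed (α : W.carrier →ₗ[ℂ] ℂ) (hα : α ∈ Dsub W) (v : V.carrier) (n : ℤ) :
    α ∘ₗ Th W n v ∈ Dsub W := by
  rw [mem_Dsub] at hα ⊢
  intro u
  obtain ⟨I, hI⟩ := V.trunc u v
  obtain ⟨A, hA⟩ := hα u
  obtain ⟨N, hN⟩ := unif (p := fun i m => ∀ w, α (Th W m (V.op u i v) w) = 0) I.toNat
    (fun i _ => hα _)
  refine ⟨max A (N + I.toNat - n), fun m hm w => ?_⟩
  have hb := borch W u v w 0 m n
  rw [finsum_range I.toNat, finsum_range 1] at hb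
  · simp only [Finset.range_one, Finset.sum_singleton, cchoose_zero, pow_zero, zpow_zero,
      Nat.cast_zero, add_zero, zero_add, sub_zero, one_smul, one_mul] at hb
    have h2 := congrArg α hb
    rw [map_sum, map_sub, hA m (by omega), sub_zero] at h2
    rw [LinearMap.comp_apply, ← h2]
    apply Finset.sum_eq_zero
    intro i hi
    rw [Finset.mem_range] at hi
    rw [map_smul, hN _ (by omega) i hi, smul_zero]
  · intro i hi
    obtain ⟨j, rfl⟩ := Nat.exists_eq_add_of_le' hi
    simp [cchoose_zero_succ]
  · intro i hi
    rw [hI _ (by omega)]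
    simp

/-- modes on `D(W)` -/
def Dop (v : V.carrier) (n : ℤ) (α : Dsub W) : Dsub W :=
  ⟨α.1 ∘ₗ Th W n v, Dsub_closed W α.1 α.2 v n⟩

theorem Dop_apply (v : V.carrier) (n : ℤ) (α : Dsub W) (w : W.carrier) :
    (Dop W v n α).1 w = α.1 (Th W n v w) := rfl

theorem Dsub_ext {α β : Dsub W} (h : ∀ w, α.1 w = β.1 w) : α = β :=
  Subtype.ext (LinearMap.ext h)

/-- evaluation at `w` -/
def ev (w : W.carrier) : Dsub W →ₗ[ℂ] ℂ where
  toFun α := α.1 w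
  map_add' _ _ := rfl
  map_smul' _ _ := rfl

theorem ev_apply (w : W.carrier) (α : Dsub W) : ev W w α = α.1 w := rfl

/-- `D(W)` as a weak module -/
def Dmod : WeakModule V where
  carrier := Dsub W
  op := Dop W
  op_linear_left n α :=
    ⟨fun a b => Dsub_ext W fun w => by
        show α.1 (Th W n (a + b) w) = α.1 (Th W n a w) + α.1 (Th W n b w)
        simp,
      fun c a => Dsub_ext W fun w => by
        show α.1 (Th W n (c • a) w) = c • α.1 (Th W n a w)
        simp⟩
  op_linear_right u n := ⟨fun _ _ => rfl, fun _ _ => rfl⟩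
  trunc u α := by
    obtain ⟨N, hN⟩ := (mem_Dsub W α.1).1 α.2 u
    exact ⟨N, fun n hn => Dsub_ext W fun w => hN n hn w⟩
  one_op n α := by
    apply Dsub_ext
    intro w
    rw [Dop_apply, Th_one]
    split_ifs <;> simp
  borcherds u v α l m n := by
    apply Dsub_ext
    intro w
    rw [← ev_apply, ← ev_apply]
    have hl : (Function.support fun i : ℕ => cchoose m i •
        Dop W (V.op u (l + (i : ℤ)) v) (m + n - (i : ℤ)) α).Finite := by
      apply fin_supp
      obtain ⟨A, hA⟩ := V.trunc u v
      refine ⟨(A - l).toNat, fun i hi => Dsub_ext W fun w => ?_⟩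
      rw [hA _ (by omega), ← ev_apply, map_smul, ev_apply, Dop_apply]
      simp
    have hr : (Function.support fun i : ℕ => ((-1 : ℂ) ^ i * cchoose l i) •
          (Dop W u (l + m - (i : ℤ)) (Dop W v (n + (i : ℤ)) α)
            - ((-1 : ℂ) ^ l) • Dop W v (l + n - (i : ℤ)) (Dop W u (m + (i : ℤ)) α))).Finite := by
      apply fin_supp
      obtain ⟨A, hA⟩ := (mem_Dsub W α.1).1 α.2 u
      obtain ⟨B, hB⟩ := (mem_Dsub W α.1).1 α.2 v
      refine ⟨(A - m).toNat + (B - n).toNat, fun i hi => Dsub_ext W fun w => ?_⟩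
      simp only [← ev_apply, map_smul, map_sub]
      simp only [ev_apply, Dop_apply]
      rw [hA _ (by omega), hB _ (by omega)]
      simp
    rw [map_finsum (ev W w) hl, map_finsum (ev W w) hr]
    have hb := congrArg α.1 (borch W u v w l m n)
    rw [map_finsum α.1 (lhs_supp W u v w l m n), map_finsum α.1 (rhs_supp W u v w l m n)] at hb
    simpa only [map_smul, map_sub, ev_apply, Dop_apply] using hb

end D

theorem DW_iff {V : VOA} (W : WeakModule V) (α : W.carrier →ₗ[ℂ] ℂ) :
    (α : W.carrier → ℂ) ∈ W.DW ↔ α ∈ Dsub W := by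
  rw [mem_Dsub]
  simp only [WeakModule.DW, Set.mem_setOf_eq, dmode_eq]
  exact ⟨fun h => h.2, fun h => ⟨α.isLinear, h⟩⟩

theorem regular_eig {V : VOA} (hV : V.regular) (M : WeakModule V) : (⨆ h : ℂ, M.eig h) = ⊤ := by
  obtain ⟨ι, S, hS, -, htop⟩ := hV M
  rw [eq_top_iff, ← htop]
  apply iSup_le
  intro i
  refine (hS i).2.1.trans (iSup_mono fun h => inf_le_left)

theorem eig_van {V : VOA} (W : GenModule V) (g h : ℂ) (β : Dsub W.toWeakModule)
    (h1 : Dop W.toWeakModule V.omega 1 β - g • β = 0) (w : W.carrier) (hw : w ∈ W.wt h)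
    (hgh : h ≠ g) : β.1 w = 0 := by
  have h2 := congrArg (ev W.toWeakModule w) h1
  rw [map_sub, map_smul, map_zero, ev_apply, ev_apply, Dop_apply, Th_omega, W.wt_L0 h w hw,
    map_smul, ← sub_smul] at h2
  rcases smul_eq_zero.1 h2 with h3 | h3
  · exact absurd (sub_eq_zero.1 h3) hgh
  · exact h3

theorem fin_of_mem {V : VOA} (hV : V.regular) (W : GenModule V) (α : Dsub W.toWeakModule) :
    {h : ℂ | ∃ w ∈ W.wt h, α.1 w ≠ 0}.Finite := by
  have hα : (α : (Dmod W.toWeakModule).carrier) ∈ ⨆ h : ℂ, (Dmod W.toWeakModule).eig h := by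
    rw [regular_eig hV]
    trivial
  refine Submodule.iSup_induction (motive := fun β : (Dmod W.toWeakModule).carrier =>
    {h : ℂ | ∃ w ∈ W.wt h, (show Dsub W.toWeakModule from β).1 w ≠ 0}.Finite) _ hα ?_ ?_ ?_
  · intro g β hβ
    apply (Set.finite_singleton g).subset
    rintro h ⟨w, hw, hne⟩
    by_contra hgh
    exact hne (eig_van W g h β hβ w hw hgh)
  · convert Set.finite_empty (α := ℂ)
    ext h
    simp only [Set.mem_setOf_eq, Set.mem_empty_iff_false, iff_false]
    rintro ⟨w, -, hne⟩
    exact hne rfl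
  · intro a b ha hb
    apply (ha.union hb).subset
    rintro h ⟨w, hw, hne⟩
    by_contra hcon
    simp only [Set.mem_union, Set.mem_setOf_eq, not_or, not_exists, not_and, not_not] at hcon
    apply hne
    have e1 := hcon.1 w hw
    have e2 := hcon.2 w hw
    show (show Dsub W.toWeakModule from a).1 w + (show Dsub W.toWeakModule from b).1 w = 0
    rw [e1, e2, add_zero]

theorem Thh_wt {V : VOA} (W : GenModule V) (h n : ℤ) (v : V.carrier) (hv : v ∈ V.wtSpace h)
    (g : ℂ) (w : W.carrier) (hw : w ∈ W.wt g) :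
    Thh W.toWeakModule h n v w ∈ W.wt (g + ((n + 1 - h : ℤ) : ℂ)) := by
  obtain ⟨K, hK⟩ := P_van v
  rw [Thh_range W.toWeakModule h n v w K hK]
  apply Submodule.sum_mem
  intro i _
  apply Submodule.smul_mem
  have := W.wt_op _ _ (P_wt V i h v hv) g (2 * h - n - i - 2) w hw
  rw [← wop_eq]
  convert this using 2
  push_cast
  ring

theorem mem_of_fin {V : VOA} (W : OrdModule V) (α : W.carrier →ₗ[ℂ] ℂ)
    (hα : {h : ℂ | ∃ w ∈ W.wt h, α w ≠ 0}.Finite) : α ∈ Dsub W.toGenModule.toWeakModule := by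
  rw [mem_Dsub]
  apply hom_ind
  · exact ⟨0, by simp⟩
  · rintro a b ⟨N, hN⟩ ⟨N', hN'⟩
    refine ⟨max N N', fun n hn w => ?_⟩
    rw [map_add, LinearMap.add_apply, map_add, hN n (by omega), hN' n (by omega), add_zero]
  · intro h v hv
    have key : ∀ F : Set ℂ, F.Finite → ∃ N : ℤ, ∀ m ≤ N, ∀ f ∈ F, W.wt (f + (m : ℂ)) = ⊥ := by
      intro F hF
      induction F, hF using Set.Finite.induction_on with
      | empty => exact ⟨0, by simp⟩
      | @insert a s _ _ ih =>
        obtain ⟨N, hN⟩ := ih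
        obtain ⟨N', hN'⟩ := W.wt_lower a
        refine ⟨min N N', fun m hm f hf => ?_⟩
        rcases hf with rfl | hf
        · exact hN' m (by omega)
        · exact hN m (by omega) f hf
    obtain ⟨N, hN⟩ := key _ hα
    refine ⟨h - 1 - N, fun n hn w => ?_⟩
    rw [Th_hom _ h n v hv, ← W.projW_sum w, finsum_eq_sum _ (W.projW_finite w), map_sum, map_sum]
    apply Finset.sum_eq_zero
    intro g _
    have hm := Thh_wt W.toGenModule h n v hv g _ (W.projW_mem g w)
    by_contra hne
    have h0 := hN (-(n + 1 - h)) (by omega) _ ⟨_, hm, hne⟩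
    have e : g + ((n + 1 - h : ℤ) : ℂ) + ((-(n + 1 - h) : ℤ) : ℂ) = g := by
      push_cast
      ring
    rw [e] at h0
    have h1 := W.projW_mem g w
    rw [h0, Submodule.mem_bot] at h1
    apply hne
    rw [h1]
    simp

end ContraAux
end

/-- If `V` is a regular vertex operator algebra (every weak
`V`-module is a direct sum of irreducible ordinary `V`-modules), then for any ordinary
`V`-module `W` one has `D(W) = W'`. -/
theorem DW_eq_restricted_dual_of_regular (V : VOA) (hV : V.regular) (W : OrdModule V) :
    W.toGenModule.toWeakModule.DW = W.toGenModule.restrictedDual := by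
  ext α
  constructor
  · intro h
    have hl : IsLinearMap ℂ α := h.1
    have h2 := (ContraAux.DW_iff W.toGenModule.toWeakModule (hl.mk' α)).1 h
    exact ⟨hl, ContraAux.fin_of_mem hV W.toGenModule ⟨hl.mk' α, h2⟩⟩
  · intro h
    have hl : IsLinearMap ℂ α := h.1
    exact (ContraAux.DW_iff W.toGenModule.toWeakModule (hl.mk' α)).2
      (ContraAux.mem_of_fin W (hl.mk' α) h.2)
end

section
/- Let V be a vertex operator algebra with V = ⊕_{n≥0} V_{(n)} and V_{(0)} = ℂ1, and let U be a graded subspace of ⊕_{n≥1} V_{(n)} such that V is linearly spanned by 1 together with elements u¹_{−n₁}···uʳ_{−n_r}1 with uⁱ ∈ U and n₁,…,n_r ≥ 1. Let W be a weak V-module and α ∈ W*. If for every u ∈ U there exists k ∈ ℤ such that ⟨α, u_m w⟩ = 0 for all w ∈ W whenever m ≤ k, then α ∈ D(W). -/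
theorem cchoose_zero_succ (i : ℕ) (hi : i ≠ 0) : cchoose 0 i = 0 := by
  unfold cchoose
  rw [Finset.prod_eq_zero (i := 0) (Finset.mem_range.2 (Nat.pos_of_ne_zero hi)) (by simp)]
  simp

theorem cchoose_zero_right (m : ℤ) : cchoose m 0 = 1 := by
  simp [cchoose]

theorem finsum_mem_submodule {M ι : Type*} [AddCommGroup M] [Module ℂ M] (T : Submodule ℂ M)
    (f : ι → M) (h : ∀ i, f i ∈ T) : (∑ᶠ i, f i) ∈ T :=
  finsum_induction (· ∈ T) T.zero_mem (fun _ _ => T.add_mem) h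

theorem unif_bound (Q : ℕ → ℤ → Prop) (h : ∀ i, ∃ K : ℤ, ∀ n : ℤ, n ≤ K → Q i n) (I : ℕ) :
    ∃ K : ℤ, ∀ n : ℤ, n ≤ K → ∀ i : ℕ, i < I → Q i n := by
  induction I with
  | zero => exact ⟨0, fun n _ i hi => absurd hi (Nat.not_lt_zero i)⟩
  | succ I ih =>
    obtain ⟨K, hK⟩ := ih
    obtain ⟨K', hK'⟩ := h I
    refine ⟨min K K', fun n hn i hi => ?_⟩
    rcases Nat.lt_succ_iff_lt_or_eq.1 hi with h1 | h1
    · exact hK n (le_trans hn (min_le_left _ _)) i h1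
    · subst h1
      exact hK' n (le_trans hn (min_le_right _ _))

/-- The vectors whose sufficiently negative modes are killed by `α`. -/
def goodSub {V : VOA} (W : WeakModule V) (α : W.carrier →ₗ[ℂ] ℂ) : Submodule ℂ V.carrier where
  carrier := {v | ∃ k : ℤ, ∀ m : ℤ, m ≤ k → ∀ w : W.carrier, α (W.op v m w) = 0}
  zero_mem' := ⟨0, fun m _ w => by rw [(W.op_linear_left m w).map_zero, map_zero]⟩
  add_mem' := by
    rintro a b ⟨k, hk⟩ ⟨k', hk'⟩
    refine ⟨min k k', fun m hm w => ?_⟩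
    rw [(W.op_linear_left m w).map_add, map_add, hk m (le_trans hm (min_le_left _ _)),
      hk' m (le_trans hm (min_le_right _ _)), add_zero]
  smul_mem' := by
    rintro c a ⟨k, hk⟩
    refine ⟨k, fun m hm w => ?_⟩
    rw [(W.op_linear_left m w).map_smul, map_smul, hk m hm, smul_zero]

theorem good_comm {V : VOA} (W : WeakModule V) (α : W.carrier →ₗ[ℂ] ℂ) (u y : V.carrier)
    (hy : y ∈ goodSub W α) (huy : ∀ j : ℕ, V.op u (j : ℤ) y ∈ goodSub W α) (a : ℤ) :
    ∃ K : ℤ, ∀ b : ℤ, b ≤ K → ∀ w : W.carrier, α (W.op u a (W.op y b w)) = 0 := by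
  obtain ⟨J, hJ⟩ := V.trunc u y
  obtain ⟨ky, hky⟩ := hy
  obtain ⟨K, hK⟩ := unif_bound
    (fun i n => ∀ w, α (W.op (V.op u (i : ℤ) y) (a + n - (i : ℤ)) w) = 0) (fun i => by
      obtain ⟨k, hk⟩ := huy i
      exact ⟨k + i - a, fun n hn w => hk _ (by omega) w⟩) J.toNat
  refine ⟨min K ky, fun b hb w => ?_⟩
  have hB := W.borcherds u y w 0 a b
  have hr : ∀ i : ℕ, i ≠ 0 → ((-1 : ℂ) ^ i * cchoose 0 i) •
          (W.op u (0 + a - (i : ℤ)) (W.op y (b + (i : ℤ)) w)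
            - ((-1 : ℂ) ^ (0 : ℤ)) • W.op y (0 + b - (i : ℤ)) (W.op u (a + (i : ℤ)) w)) = 0 := by
    intro i hi
    rw [cchoose_zero_succ i hi, mul_zero, zero_smul]
  rw [finsum_eq_single _ 0 hr] at hB
  have hl : (∑ᶠ i : ℕ, cchoose a i • W.op (V.op u (0 + (i : ℤ)) y) (a + b - (i : ℤ)) w)
      ∈ LinearMap.ker α := by
    refine finsum_mem_submodule _ _ fun i => Submodule.smul_mem _ _ ?_
    rw [LinearMap.mem_ker, zero_add]
    by_cases hi : i < J.toNat
    · exact hK b (le_trans hb (min_le_left _ _)) i hi w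
    · rw [hJ i (by omega), (W.op_linear_left _ w).map_zero, map_zero]
  rw [hB, LinearMap.mem_ker] at hl
  simp only [cchoose_zero_right, pow_zero, zpow_zero, one_mul, one_smul, Nat.cast_zero, sub_zero,
    add_zero, zero_add, map_sub] at hl
  rw [hky b (le_trans hb (min_le_right _ _)), sub_zero] at hl
  exact hl

theorem good_op {V : VOA} (W : WeakModule V) (α : W.carrier →ₗ[ℂ] ℂ) (u y : V.carrier)
    (hu : u ∈ goodSub W α)
    (hy : y ∈ goodSub W α) (huy : ∀ j : ℕ, V.op u (j : ℤ) y ∈ goodSub W α) (l : ℤ) :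
    V.op u l y ∈ goodSub W α := by
  have hc := good_comm W α u y hy huy
  obtain ⟨ky, hky⟩ := hy
  obtain ⟨ku, hku⟩ := hu
  obtain ⟨K, hK⟩ := unif_bound
    (fun i n => ∀ w, α (W.op u (l - (i : ℤ)) (W.op y (n + (i : ℤ)) w)) = 0) (fun i => by
      obtain ⟨k, hk⟩ := hc (l - i)
      exact ⟨k - i, fun n hn w => hk _ (by omega) w⟩) (l - ku).toNat
  refine ⟨min K (ky - l), fun n hn w => ?_⟩
  have hB := W.borcherds u y w l 0 n
  have hl : ∀ i : ℕ, i ≠ 0 →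
      cchoose 0 i • W.op (V.op u (l + (i : ℤ)) y) (0 + n - (i : ℤ)) w = 0 := by
    intro i hi
    rw [cchoose_zero_succ i hi, zero_smul]
  rw [finsum_eq_single _ 0 hl] at hB
  simp only [cchoose_zero_right, one_smul, Nat.cast_zero, sub_zero, add_zero, zero_add] at hB
  rw [hB, ← LinearMap.mem_ker]
  refine finsum_mem_submodule _ _ fun i => Submodule.smul_mem _ _ (Submodule.sub_mem _ ?_
    (Submodule.smul_mem _ _ ?_)) <;> rw [LinearMap.mem_ker]
  · by_cases hi : i < (l - ku).toNat
    · exact hK n (le_trans hn (min_le_left _ _)) i hi w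
    · exact hku _ (by omega) _
  · have := le_trans hn (min_le_right _ _)
    exact hky _ (by omega) _

theorem mem_of_proj {V : VOA} (T : Submodule ℂ V.carrier) (f : V.carrier →ₗ[ℂ] V.carrier)
    (v : V.carrier) (h : ∀ n, f (V.proj n v) ∈ T) : f v ∈ T := by
  have : (∑ᶠ n : ℤ, V.proj n v) ∈ T.comap f := finsum_mem_submodule _ _ h
  rwa [V.proj_sum] at this

theorem good_all (V : VOA)
    (hneg : ∀ n : ℤ, n < 0 → V.wtSpace n = ⊥)
    (U : Submodule ℂ V.carrier)
    (hUgraded : ∀ u ∈ U, ∀ n : ℤ, V.proj n u ∈ U)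
    (hUpos : ∀ u ∈ U, ∀ n : ℤ, n ≤ 0 → V.proj n u = 0)
    (hspan : Submodule.span ℂ {x : V.carrier | ∃ l : List (V.carrier × ℤ),
        (∀ p ∈ l, p.1 ∈ U ∧ p.2 ≤ -1) ∧ x = V.iterApply l V.one} = ⊤)
    (W : WeakModule V) (α : W.carrier →ₗ[ℂ] ℂ)
    (hU : ∀ u ∈ U, u ∈ goodSub W α) (v : V.carrier) : v ∈ goodSub W α := by
  have key : ∀ N : ℕ, ∀ n : ℤ, n < N → ∀ v : V.carrier, V.proj n v ∈ goodSub W α := by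
    intro N
    induction N with
    | zero =>
      intro n hn v
      have h1 := V.proj_mem n v
      rw [hneg n (by simpa using hn), Submodule.mem_bot] at h1
      rw [h1]
      exact Submodule.zero_mem _
    | succ N ih =>
      intro n hn v
      by_cases hlt : n < N
      · exact ih n hlt v
      have hnN : n = N := by push_cast at hn; omega
      have hwt : ∀ m : ℤ, m < N → ∀ x ∈ V.wtSpace m, x ∈ goodSub W α := by
        intro m hm x hx
        rw [← V.proj_eq m x hx]
        exact ih m hm x
      let pN : V.carrier →ₗ[ℂ] V.carrier := IsLinearMap.mk' _ (V.proj_linear n)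
      have hle : (⊤ : Submodule ℂ V.carrier) ≤ (goodSub W α).comap pN := by
        rw [← hspan, Submodule.span_le]
        rintro x ⟨l, hl, rfl⟩
        change V.proj n _ ∈ goodSub W α
        cases l with
        | nil =>
          change V.proj n V.one ∈ goodSub W α
          by_cases h0 : n = 0
          · rw [h0, V.proj_eq 0 _ V.one_wt]
            refine ⟨-2, fun m hm w => ?_⟩
            rw [W.one_op, if_neg (by omega), map_zero]
          · rw [V.proj_ne 0 n (Ne.symm h0) _ V.one_wt]
            exact Submodule.zero_mem _
        | cons p l =>
          obtain ⟨hpU, hp2⟩ := hl p (by simp)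
          change V.proj n (V.op p.1 p.2 (V.iterApply l V.one)) ∈ goodSub W α
          generalize V.iterApply l V.one = y
          refine mem_of_proj (goodSub W α)
            (pN ∘ₗ IsLinearMap.mk' _ (V.op_linear_left p.2 y)) p.1 fun a => ?_
          refine mem_of_proj (goodSub W α)
            (pN ∘ₗ IsLinearMap.mk' _ (V.op_linear_right (V.proj a p.1) p.2)) y fun b => ?_
          change V.proj n (V.op (V.proj a p.1) p.2 (V.proj b y)) ∈ goodSub W α
          by_cases ha : a ≤ 0
          · rw [hUpos _ hpU a ha, (V.op_linear_left _ _).map_zero, (V.proj_linear n).map_zero]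
            exact Submodule.zero_mem _
          have hw := fun j => V.op_wt a b j _ (V.proj_mem a p.1) _ (V.proj_mem b y)
          by_cases hab : a + b - p.2 - 1 = n
          · have hw2 := hw p.2
            rw [hab] at hw2
            rw [V.proj_eq n _ hw2]
            exact good_op W α _ _ (hU _ (hUgraded _ hpU a)) (ih b (by omega) y)
              (fun j => hwt _ (by omega) _ (hw j)) p.2
          · rw [V.proj_ne _ n hab _ (hw p.2)]
            exact Submodule.zero_mem _
      exact hle (Submodule.mem_top (x := v))
  refine mem_of_proj (goodSub W α) LinearMap.id v fun n => ?_
  exact key (n + 1).toNat n (by omega) v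

/-- Suppose `V = ⊕_{n≥0} V₍ₙ₎` with `V₍₀₎ = ℂ1` and `U` is a graded
subspace of `⊕_{n≥1} V₍ₙ₎` such that `V` is linearly spanned by `1` together with the
elements `u¹_{-n₁} ⋯ uʳ_{-n_r} 1` (`uⁱ ∈ U`, `nᵢ ≥ 1`).  If `α ∈ W*` is a linear
functional on a weak `V`-module `W` such that for every `u ∈ U` there is `k ∈ ℤ` with
`⟨α, uₘw⟩ = 0` for all `w ∈ W` and `m ≤ k`, then `α ∈ D(W)`. -/
theorem mem_DW_of_generators (V : VOA)
    (hneg : ∀ n : ℤ, n < 0 → V.wtSpace n = ⊥)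
    (h0 : V.wtSpace 0 = Submodule.span ℂ {V.one})
    (U : Submodule ℂ V.carrier)
    (hUgraded : ∀ u ∈ U, ∀ n : ℤ, V.proj n u ∈ U)
    (hUpos : ∀ u ∈ U, ∀ n : ℤ, n ≤ 0 → V.proj n u = 0)
    (hspan : Submodule.span ℂ {x : V.carrier | ∃ l : List (V.carrier × ℤ),
        (∀ p ∈ l, p.1 ∈ U ∧ p.2 ≤ -1) ∧ x = V.iterApply l V.one} = ⊤)
    (W : WeakModule V) (α : W.carrier → ℂ) (hα : IsLinearMap ℂ α)
    (hU : ∀ u ∈ U, ∃ k : ℤ, ∀ m : ℤ, m ≤ k → ∀ w : W.carrier, α (W.op u m w) = 0) :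
    α ∈ W.DW := by
  have good := good_all V hneg U hUgraded hUpos hspan W (IsLinearMap.mk' α hα) hU
  refine ⟨hα, fun v => ?_⟩
  have hL0 : ∀ i : ℕ, (V.L 1)^[i] (0 : V.carrier) = 0 := fun i =>
    Function.iterate_fixed (V.op_linear_right V.omega (1 + 1)).map_zero i
  have hLw : ∀ (h : ℤ) (i : ℕ), (V.L 1)^[i] (V.proj h v) ∈ V.wtSpace (h - i) := by
    intro h i
    induction i with
    | zero => simpa using V.proj_mem h v
    | succ i ih =>
      rw [Function.iterate_succ_apply']
      have := V.op_wt 2 (h - i) (1 + 1) _ V.omega_wt _ ih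
      rwa [show 2 + (h - (i : ℤ)) - (1 + 1) - 1 = h - ((i + 1 : ℕ) : ℤ) by push_cast; ring] at this
  have hz : ∀ (x : V.carrier) (m : ℤ) (w : W.carrier), x = 0 → α (W.op x m w) = 0 := by
    rintro x m w rfl
    rw [(W.op_linear_left m w).map_zero, hα.map_zero]
  have hh : ∀ h : ℤ, ∃ N : ℤ, ∀ n : ℤ, N ≤ n → ∀ (i : ℕ) (w : W.carrier),
      α (W.op ((V.L 1)^[i] (V.proj h v)) (2 * h - n - (i : ℤ) - 2) w) = 0 := by
    intro h
    obtain ⟨K, hK⟩ := unif_bound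
      (fun i n => ∀ w, α (W.op ((V.L 1)^[i] (V.proj h v)) n w) = 0)
      (fun i => good _) (h + 1).toNat
    refine ⟨2 * h - K - 2, fun n hn i w => ?_⟩
    by_cases hi : i < (h + 1).toNat
    · exact hK _ (by omega) i hi w
    · apply hz
      have := hLw h i
      rwa [hneg _ (by omega), Submodule.mem_bot] at this
  choose N hN using hh
  obtain ⟨B, hB⟩ := ((V.proj_finite v).image N).bddAbove
  refine ⟨B, fun n hn w => ?_⟩
  unfold WeakModule.dmode
  have : ∀ (h : ℤ) (i : ℕ),
      α (W.op ((V.L 1)^[i] (V.proj h v)) (2 * h - n - (i : ℤ) - 2) w) = 0 := by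
    intro h i
    by_cases h0 : V.proj h v = 0
    · exact hz _ _ _ (by rw [h0, hL0])
    · exact hN h n (le_trans (hB ⟨h, h0, rfl⟩) hn) i w
  simp only [this, mul_zero, finsum_zero]
end

section
/- Let V be a vertex operator algebra, W a generalized V-module, v ∈ V and w ∈ W homogeneous, and r, s ∈ ℕ such that L(−1)^r v ∈ V₊ and L(−1)^s w ∈ W₊. Then v_{−r−s−k} w ∈ C₁(W) for every integer k ≥ 1. -/
theorem cchoose_neg_two (i : ℕ) : (-1 : ℂ) ^ i * cchoose (-2) i = (i : ℂ) + 1 := by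
  have key : (-1 : ℂ) ^ i * ∏ j ∈ Finset.range i, (((-2 : ℤ) : ℂ) - (j : ℂ))
      = (Nat.factorial (i + 1) : ℂ) := by
    induction i with
    | zero => simp
    | succ n ih =>
      rw [Finset.prod_range_succ, Nat.factorial_succ, Nat.cast_mul, ← ih]
      push_cast
      ring
  unfold cchoose
  rw [← mul_div_assoc, key, Nat.factorial_succ]
  have : (Nat.factorial i : ℂ) ≠ 0 := by exact_mod_cast Nat.factorial_ne_zero i
  field_simp
  push_cast
  ring

theorem D_eq (V : VOA) (u : V.carrier) : V.op V.omega 0 u = V.op u (-2) V.one := by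
  have h := V.L_neg_one u (-1) V.one
  rw [V.create] at h
  simpa using h

theorem W_deriv {V : VOA} (W : GenModule V) (u : V.carrier) (w : W.carrier) (n : ℤ)
    (hn : n < 0) : W.op (V.op V.omega 0 u) n w = (-(n : ℂ)) • W.op u (n - 1) w := by
  have hB := W.borcherds u V.one w (-2) 0 n
  rw [finsum_eq_single _ 0 (by
    intro i hi
    rw [cchoose_zero_succ i hi, zero_smul])] at hB
  obtain ⟨j, rfl⟩ : ∃ j : ℕ, n = -((j : ℤ) + 1) := ⟨(-n - 1).toNat, by omega⟩
  have hz : ∀ (x : V.carrier) (m : ℤ), W.op x m (0 : W.carrier) = 0 := fun x m =>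
    (W.op_linear_right x m).map_zero
  rw [finsum_eq_single _ j (by
    intro i hi
    rw [W.one_op, W.one_op, if_neg (by omega), if_neg (by omega), hz]
    simp)] at hB
  rw [W.one_op, W.one_op, if_pos (by omega), if_neg (by omega), cchoose_neg_two,
    cchoose_zero_right] at hB
  rw [D_eq]
  have e1 : (-2 : ℤ) + 0 - (j : ℤ) = -((j : ℤ) + 1) - 1 := by ring
  rw [e1] at hB
  simp only [Nat.cast_zero, add_zero, zero_add, sub_zero, smul_zero, one_smul] at hB
  rw [hB]
  congr 1
  push_cast
  ring

theorem W_comm {V : VOA} (W : GenModule V) (u : V.carrier) (w : W.carrier) (n : ℤ) :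
    W.op (V.op V.omega 0 u) n w
      = W.op V.omega 0 (W.op u n w) - W.op u n (W.op V.omega 0 w) := by
  have hB := W.borcherds V.omega u w 0 0 n
  rw [finsum_eq_single _ 0 (by
    intro i hi
    rw [cchoose_zero_succ i hi, zero_smul])] at hB
  rw [finsum_eq_single _ 0 (by
    intro i hi
    rw [cchoose_zero_succ i hi, mul_zero, zero_smul])] at hB
  simpa [cchoose_zero_right] using hB

theorem D_pos (V : VOA) (u : V.carrier) (hu : u ∈ V.pos) : V.op V.omega 0 u ∈ V.pos := by
  have hle : V.pos ≤ V.pos.comap (IsLinearMap.mk' _ (V.op_linear_right V.omega 0)) := by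
    conv_lhs => unfold VOA.pos
    refine iSup₂_le fun n hn x hx => ?_
    have h1 := V.op_wt 2 n 0 V.omega V.omega_wt x hx
    exact (le_iSup₂_of_le (f := fun (n : ℤ) (_ : 1 ≤ n) => V.wtSpace n)
      (2 + n - 0 - 1) (by omega) le_rfl) h1
  exact hle hu

theorem iter_pos (V : VOA) (j : ℕ) (u : V.carrier) (hu : u ∈ V.pos) :
    (V.op V.omega 0)^[j] u ∈ V.pos := by
  induction j generalizing u with
  | zero => exact hu
  | succ j ih => exact ih _ (D_pos V u hu)

theorem iter_left_mem {V : VOA} (W : GenModule V) (j : ℕ) (u : V.carrier) (w : W.carrier)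
    (n : ℤ) (hn : n < 0) (hm : W.op ((V.op V.omega 0)^[j] u) n w ∈ W.C1W) :
    W.op u (n - (j : ℤ)) w ∈ W.C1W := by
  induction j generalizing u with
  | zero => simpa using hm
  | succ j ih =>
    have h1 := ih (V.op V.omega 0 u) hm
    rw [W_deriv W u w _ (by omega)] at h1
    have hne : (-((n - (j : ℤ) : ℤ) : ℂ)) ≠ 0 := by
      rw [neg_ne_zero, Int.cast_ne_zero]
      omega
    have h2 := (Submodule.smul_mem_iff _ hne).mp h1
    have e : n - ((j + 1 : ℕ) : ℤ) = n - (j : ℤ) - 1 := by push_cast; ring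
    rwa [e]

theorem iter_right_mem {V : VOA} (W : GenModule V) (j : ℕ) (u : V.carrier) (w : W.carrier)
    (n : ℤ) (hn : n < 0) (hm : W.op u n ((fun x => W.op V.omega 0 x)^[j] w) ∈ W.C1W) :
    W.op u (n - (j : ℤ)) w ∈ W.C1W := by
  induction j generalizing w with
  | zero => simpa using hm
  | succ j ih =>
    have h1 := ih (W.op V.omega 0 w) hm
    have hc := W_comm W u w (n - (j : ℤ))
    rw [W_deriv W u w _ (by omega)] at hc
    have hD : W.op V.omega 0 (W.op u (n - (j : ℤ)) w) ∈ W.C1W :=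
      Submodule.subset_span (Or.inr ⟨_, rfl⟩)
    have h3 := W.C1W.sub_mem hD h1
    rw [← hc] at h3
    have hne : (-((n - (j : ℤ) : ℤ) : ℂ)) ≠ 0 := by
      rw [neg_ne_zero, Int.cast_ne_zero]
      omega
    have h2 := (Submodule.smul_mem_iff _ hne).mp h3
    have e : n - ((j + 1 : ℕ) : ℤ) = n - (j : ℤ) - 1 := by push_cast; ring
    rwa [e]

/-- Let `W` be a generalized `V`-module, `v ∈ V` and `w ∈ W`
homogeneous, and `r, s ∈ ℕ` such that `L(-1)^r v ∈ V₊` and `L(-1)^s w ∈ W₊`.  Then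
`v_{-r-s-k} w ∈ C₁(W)` for every integer `k ≥ 1`. -/
theorem mode_mem_C1W (V : VOA) (W : GenModule V)
    (v : V.carrier) (w : W.carrier)
    (p : ℤ) (hv : v ∈ V.wtSpace p) (h : ℂ) (hw : w ∈ W.wt h)
    (r s : ℕ)
    (hr : (V.L (-1))^[r] v ∈ V.pos)
    (hs : (fun u => W.op V.omega 0 u)^[s] w ∈ W.posW) :
    ∀ k : ℤ, 1 ≤ k → W.op v (-(r : ℤ) - (s : ℤ) - k) w ∈ W.C1W := by
  intro k hk
  have h1 := iter_left_mem W r v w (-(s : ℤ) - k) (by omega)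
  have e1 : -(s : ℤ) - k - (r : ℤ) = -(r : ℤ) - (s : ℤ) - k := by ring
  rw [e1] at h1
  apply h1
  have hLL : (V.L (-1)) = V.op V.omega 0 := by
    funext x
    simp [VOA.L]
  rw [hLL] at hr
  have h2 := iter_right_mem W s ((V.op V.omega 0)^[r] v) w (-k) (by omega)
  have e2 : -k - (s : ℤ) = -(s : ℤ) - k := by ring
  rw [e2] at h2
  apply h2
  obtain ⟨j, rfl⟩ : ∃ j : ℕ, k = (j : ℤ) + 1 := ⟨(k - 1).toNat, by omega⟩
  have h3 := iter_left_mem W j ((V.op V.omega 0)^[r] v)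
    ((fun u => W.op V.omega 0 u)^[s] w) (-1) (by omega)
  have e3 : (-1 : ℤ) - (j : ℤ) = -((j : ℤ) + 1) := by ring
  rw [e3] at h3
  apply h3
  exact Submodule.subset_span (Or.inl ⟨_, iter_pos V j _ hr, _, hs, rfl⟩)
end

section
/- Let V be a vertex operator algebra and U a graded subspace of V such that V = U + C₁(V) and ⊕_{n≤0} V_{(n)} ⊆ U + ℂ1. Then V is linearly spanned by elements u¹_{n₁}···uʳ_{n_r}1 with r ∈ ℕ, uⁱ ∈ U, n_i ∈ ℤ; that is, U generates V as a vertex operator algebra. -/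
theorem cchoose_zero_zero : cchoose 0 0 = 1 := by simp [cchoose]

namespace VOA

/-- The span of the iterated modes of `U` applied to the vacuum. -/
def genSpan (V : VOA) (U : Submodule ℂ V.carrier) : Submodule ℂ V.carrier :=
  Submodule.span ℂ {x : V.carrier | ∃ l : List (V.carrier × ℤ),
    (∀ p ∈ l, p.1 ∈ (U : Set V.carrier)) ∧ x = V.iterApply l V.one}

/-- The vectors all of whose modes preserve `W`. -/
def stab (V : VOA) (W : Submodule ℂ V.carrier) : Submodule ℂ V.carrier where
  carrier := {v | ∀ n : ℤ, ∀ w ∈ W, V.op v n w ∈ W}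
  add_mem' := by
    intro a b ha hb n w hw
    rw [(V.op_linear_left n w).map_add]
    exact W.add_mem (ha n w hw) (hb n w hw)
  zero_mem' := by
    intro n w hw
    rw [(V.op_linear_left n w).map_zero]
    exact W.zero_mem
  smul_mem' := by
    intro c a ha n w hw
    rw [(V.op_linear_left n w).map_smul]
    exact W.smul_mem c (ha n w hw)

theorem op_mem_genSpan (V : VOA) (U : Submodule ℂ V.carrier) (u : V.carrier) (hu : u ∈ U)
    (n : ℤ) (w : V.carrier) (hw : w ∈ V.genSpan U) : V.op u n w ∈ V.genSpan U := by
  have h : V.genSpan U ≤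
      (V.genSpan U).comap (IsLinearMap.mk' _ (V.op_linear_right u n)) := by
    refine Submodule.span_le.2 ?_
    rintro x ⟨l, hl, rfl⟩
    refine Submodule.subset_span ⟨(u, n) :: l, ?_, rfl⟩
    intro p hp
    rcases List.mem_cons.1 hp with rfl | hp
    · exact hu
    · exact hl p hp
  exact h hw

theorem one_mem_genSpan (V : VOA) (U : Submodule ℂ V.carrier) : V.one ∈ V.genSpan U :=
  Submodule.subset_span ⟨[], by simp, rfl⟩

theorem stab_op (V : VOA) (W : Submodule ℂ V.carrier) (u v : V.carrier)
    (hu : u ∈ V.stab W) (hv : v ∈ V.stab W) (l : ℤ) : V.op u l v ∈ V.stab W := by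
  intro n w hw
  have h := V.borcherds u v w l 0 n
  rw [finsum_eq_single _ 0 (by intro i hi; rw [cchoose_zero_succ i hi, zero_smul])] at h
  simp only [cchoose_zero_zero, one_smul, Nat.cast_zero, add_zero, zero_add, sub_zero] at h
  rw [h]
  refine finsum_induction (· ∈ W) W.zero_mem (fun _ _ => W.add_mem) (fun i => ?_)
  exact W.smul_mem _ (W.sub_mem (hu _ _ (hv _ _ hw)) (W.smul_mem _ (hv _ _ (hu _ _ hw))))

theorem stab_L (V : VOA) (W : Submodule ℂ V.carrier) (v : V.carrier)
    (hv : v ∈ V.stab W) : V.op V.omega 0 v ∈ V.stab W := by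
  intro n w hw
  rw [V.L_neg_one]
  exact W.smul_mem _ (hv _ _ hw)

theorem mem_of_wt (V : VOA) (T : Submodule ℂ V.carrier) (h : ∀ n, V.wtSpace n ≤ T)
    (v : V.carrier) : v ∈ T := by
  rw [← V.proj_sum v]
  exact finsum_induction (· ∈ T) T.zero_mem (fun _ _ => T.add_mem)
    (fun i => h i (V.proj_mem i v))

theorem proj_mem_of (V : VOA) (T : Submodule ℂ V.carrier) (j k : ℤ) (x : V.carrier)
    (hx : x ∈ V.wtSpace j) (h : j = k → x ∈ T) : V.proj k x ∈ T := by
  by_cases hjk : j = k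
  · subst hjk
    rw [V.proj_eq _ x hx]
    exact h rfl
  · rw [V.proj_ne j k hjk x hx]
    exact T.zero_mem

theorem proj_C1 (V : VOA) (W : Submodule ℂ V.carrier) (n k : ℤ) (hk : k ≤ n + 1)
    (ih : ∀ j ≤ n, V.wtSpace j ≤ V.stab W) (x : V.carrier) (hx : x ∈ V.C1) :
    V.proj k x ∈ V.stab W := by
  have h : V.C1 ≤ (V.stab W).comap (IsLinearMap.mk' _ (V.proj_linear k)) := by
    refine Submodule.span_le.2 ?_
    rintro x (⟨u, hu, v, hv, rfl⟩ | ⟨v, rfl⟩)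
    · have h1 : V.pos ≤ ((V.stab W).comap (IsLinearMap.mk' _ (V.proj_linear k))).comap
          (IsLinearMap.mk' _ (V.op_linear_left (-1) v)) := by
        refine iSup₂_le fun a ha u hu => ?_
        have h2 : V.pos ≤ ((V.stab W).comap (IsLinearMap.mk' _ (V.proj_linear k))).comap
            (IsLinearMap.mk' _ (V.op_linear_right u (-1))) := by
          refine iSup₂_le fun b hb v hv => ?_
          refine V.proj_mem_of (V.stab W) _ k _ (V.op_wt a b (-1) u hu v hv) fun he => ?_
          exact V.stab_op W u v (ih a (by omega) hu) (ih b (by omega) hv) (-1)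
        exact h2 hv
      exact h1 hu
    · refine V.mem_of_wt (((V.stab W).comap (IsLinearMap.mk' _ (V.proj_linear k))).comap
          (IsLinearMap.mk' _ (V.op_linear_right V.omega 0))) (fun j v hv => ?_) v
      refine V.proj_mem_of (V.stab W) _ k _ (V.op_wt 2 j 0 _ V.omega_wt v hv) fun he => ?_
      exact V.stab_L W v (ih j (by omega) hv)
  exact h hx

end VOA

/-- Let `U` be a graded subspace of `V` with `V = U + C₁(V)` and
`⊕_{n≤0} V₍ₙ₎ ⊆ U + ℂ1`.  Then `V` is linearly spanned by the elements
`u¹_{n₁} ⋯ uʳ_{n_r} 1` with `uⁱ ∈ U`, `nᵢ ∈ ℤ`; i.e. `U` generates `V` as a vertex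
operator algebra. -/
theorem generates_of_compl_C1 (V : VOA) (U : Submodule ℂ V.carrier)
    (hUgraded : ∀ u ∈ U, ∀ n : ℤ, V.proj n u ∈ U)
    (hsum : U ⊔ V.C1 = ⊤)
    (hneg : ∀ n : ℤ, n ≤ 0 → V.wtSpace n ≤ U ⊔ Submodule.span ℂ {V.one}) :
    V.generates (U : Set V.carrier) := by
  have hU : U ≤ V.stab (V.genSpan U) := fun u hu n w hw => V.op_mem_genSpan U u hu n w hw
  have h1 : V.one ∈ V.stab (V.genSpan U) := by
    intro n w hw
    rw [V.one_op]
    split_ifs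
    · exact hw
    · exact Submodule.zero_mem _
  have key : ∀ n : ℕ, ∀ k : ℤ, k ≤ n → V.wtSpace k ≤ V.stab (V.genSpan U) := by
    intro n
    induction n with
    | zero =>
      intro k hk
      refine (hneg k (by simpa using hk)).trans (sup_le hU ?_)
      rw [Submodule.span_le]
      rintro x rfl
      exact h1
    | succ n ih =>
      intro k hk v hv
      have hv' : v ∈ U ⊔ V.C1 := hsum ▸ Submodule.mem_top
      obtain ⟨u, hu, c, hc, huc⟩ := Submodule.mem_sup.1 hv'
      rw [← V.proj_eq k v hv, ← huc, (V.proj_linear k).map_add]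
      exact Submodule.add_mem _ (hU (hUgraded u hu k))
        (V.proj_C1 _ n k (by push_cast at hk; exact hk) ih c hc)
  have hall : ∀ v, v ∈ V.stab (V.genSpan U) := fun v =>
    V.mem_of_wt _ (fun n => key n.toNat n (Int.self_le_toNat n)) v
  change V.genSpan U = ⊤
  rw [eq_top_iff]
  intro v _
  rw [← V.create v]
  exact hall v (-1) _ (V.one_mem_genSpan U)
end
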